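/- arXiv:1909.03870 — 2 statements merged into one kernel-verified Lean document; each statement's English description precedes it below -/
import Mathlib

section
/- Let T = 2 and d ∈ {2, 3}, let c(Y) = Σ_{1≤i<j≤d} c_{ij} Y_i Y_j with c_{ij} ≥ 0 inducing a connected graph on {1,…,d}, and suppose the marginals (μ_i, ν_i)_{1≤i≤d} have finite second moments and satisfy LIM. If in addition each first marginal μ_i is continuous (i.e. μ_i({x}) = 0 for every x ∈ ℝ), then the first d-dimensional marginal π¹ = π∘X^{-1} is the same for every maximizer π of the MMOT problem sup_{π ∈ ℳ(μ,ν)} ∫ c dπ. -/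
open MeasureTheory Filter

namespace MMOT

/-- `ℝ^d`. -/
abbrev Vec (d : ℕ) := Fin d → ℝ

/-- The set `ℳ(μ,ν)` of martingale couplings: laws of `(X,Y)` with `X_i ∼ μ_i`, `Y_i ∼ ν_i`
and `E[Y|X] = X`. -/
def PairMartSet {d : ℕ} (μ ν : Fin d → Measure ℝ) : Set (Measure (Vec d × Vec d)) :=
  {π | IsProbabilityMeasure π ∧
    (∀ i, π.map (fun p => p.1 i) = μ i) ∧
    (∀ i, π.map (fun p => p.2 i) = ν i) ∧
    (∀ i, (π[fun p => p.2 i | MeasurableSpace.comap Prod.fst inferInstance])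
      =ᵐ[π] fun p => p.1 i)}

/-- Linear Increment of Marginals: `ν_i = μ_i * (a_i)_#κ` for a centered non-Dirac
probability measure `κ`, i.e. `law(Y_i) = law(X_i + a_i Z)` with `Z ∼ κ` independent,
`E[Z] = 0` and `P[Z ≠ 0] > 0`. -/
def LIM {d : ℕ} (μ ν : Fin d → Measure ℝ) (a : Fin d → ℝ) (κ : Measure ℝ) : Prop :=
  IsProbabilityMeasure κ ∧ Integrable (fun z : ℝ => z) κ ∧ (∫ z, z ∂κ) = 0 ∧
    κ {(0 : ℝ)}ᶜ ≠ 0 ∧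
    ∀ i, ν i = ((μ i).prod (κ.map fun z => a i * z)).map fun p => p.1 + p.2

/-- The covariance cost `Σ_{i<j} c_{ij} y_i y_j`. -/
noncomputable def covCost {d : ℕ} (c : Fin d → Fin d → ℝ) (y : Vec d) : ℝ :=
  ∑ i, ∑ j, if i < j then c i j * y i * y j else 0

/-- Adjacency relation of the graph induced by the coefficients `c_{ij}`, `i < j`. -/
def AdjRel {d : ℕ} (c : Fin d → Fin d → ℝ) (i j : Fin d) : Prop :=
  (i < j ∧ 0 < c i j) ∨ (j < i ∧ 0 < c j i)

/-- `π` is a maximizer of the MMOT problem `sup_{π ∈ ℳ(μ,ν)} ∫ c(y) π(dx,dy)`. -/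
def IsMaximizer {d : ℕ} (μ ν : Fin d → Measure ℝ) (c : Fin d → Fin d → ℝ)
    (π : Measure (Vec d × Vec d)) : Prop :=
  π ∈ PairMartSet μ ν ∧
    ∀ π' ∈ PairMartSet μ ν, ∫ p, covCost c p.2 ∂π' ≤ ∫ p, covCost c p.2 ∂π

/-!
By Hoeffding's formula the covariance of a coupling of two given marginals is the integral of its
joint distribution function, up to a term depending on the marginals only. Hence the comonotone
coupling, which has the largest distribution function, is the unique maximizer of the covariance.

For a martingale coupling, `cov(Yᵢ, Yⱼ) = cov(Xᵢ, Xⱼ) + cov(Yᵢ - Xᵢ, Yⱼ - Xⱼ)`. Under LIM the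
increments have variances `aᵢ² Var κ`, so by Cauchy-Schwarz the last term is at most `aᵢ aⱼ Var κ`.
Both terms are maximal, simultaneously for all pairs, when `X` is comonotone and `Y = X + Z a` with
an independent `Z ∼ κ`. So a maximizer makes `(Xᵢ, Xⱼ)` comonotone along every edge `i ∼ j`. As the
`μᵢ` have no atoms, this says `Fᵢ(Xᵢ) = Fⱼ(Xⱼ)` almost surely, where `Fᵢ` is the distribution
function of `μᵢ`. That relation is transitive, and on a connected graph all of `X` is comonotone.
-/

open ProbabilityTheory Set Topology

section Hoeffding

/-- The kernel of the layer-cake representation `x = ∫ s, layerKernel s x`, written as a difference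
of two indicators so that `layerKernel s` and the indicator of `Iic s` have opposite
fluctuations. -/
noncomputable def layerKernel (s x : ℝ) : ℝ :=
  (Ici 0).indicator 1 s - (Iic s).indicator 1 x

lemma layerKernel_eq_sub_indicator_Ico (s x : ℝ) :
    layerKernel s x = (Ico 0 x).indicator 1 s - (Ico x 0).indicator 1 s := by
  simp only [layerKernel, indicator_apply, mem_Ici, mem_Iic, mem_Ico, Pi.one_apply]
  grind

@[fun_prop]
lemma measurable_layerKernel {Ω : Type*} [MeasurableSpace Ω] {f g : Ω → ℝ}
    (hf : Measurable f) (hg : Measurable g) : Measurable fun w => layerKernel (f w) (g w) :=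
  ((measurable_one.indicator measurableSet_Ici).comp hf).sub
    (measurable_one.indicator (measurableSet_le hg hf))

lemma integrable_indicator_Ico_one (a b : ℝ) :
    Integrable ((Ico a b).indicator (1 : ℝ → ℝ)) volume :=
  (integrable_indicator_iff measurableSet_Ico).2 (integrableOn_const measure_Ico_lt_top.ne)

lemma integrable_layerKernel (x : ℝ) : Integrable fun s => layerKernel s x := by
  simp only [layerKernel_eq_sub_indicator_Ico]
  exact (integrable_indicator_Ico_one 0 x).sub (integrable_indicator_Ico_one x 0)

lemma integral_layerKernel (x : ℝ) : ∫ s, layerKernel s x = x := by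
  simp only [layerKernel_eq_sub_indicator_Ico]
  rw [integral_sub (integrable_indicator_Ico_one 0 x) (integrable_indicator_Ico_one x 0),
    integral_indicator_one measurableSet_Ico, integral_indicator_one measurableSet_Ico,
    Real.volume_real_Ico, Real.volume_real_Ico]
  grind

lemma integral_norm_layerKernel (x : ℝ) : ∫ s, ‖layerKernel s x‖ = |x| := by
  have hnorm (s : ℝ) :
      ‖layerKernel s x‖ = (Ico 0 x).indicator 1 s + (Ico x 0).indicator 1 s := by
    simp only [layerKernel_eq_sub_indicator_Ico, indicator_apply, mem_Ico, Pi.one_apply,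
      Real.norm_eq_abs]
    grind
  simp only [hnorm]
  rw [integral_add (integrable_indicator_Ico_one 0 x) (integrable_indicator_Ico_one x 0),
    integral_indicator_one measurableSet_Ico, integral_indicator_one measurableSet_Ico,
    Real.volume_real_Ico, Real.volume_real_Ico]
  grind

lemma integrable_layerKernel_prod {μ : Measure ℝ} [SFinite μ] (hμ : Integrable id μ) :
    Integrable (fun q : ℝ × ℝ => layerKernel q.1 q.2) (volume.prod μ) := by
  rw [integrable_prod_iff' (by fun_prop)]
  refine ⟨ae_of_all _ integrable_layerKernel, ?_⟩
  simpa only [integral_norm_layerKernel] using! hμ.abs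

lemma integral_integral_layerKernel {μ : Measure ℝ} [SFinite μ] (hμ : Integrable id μ) :
    ∫ s, ∫ x, layerKernel s x ∂μ = ∫ x, x ∂μ := by
  rw [integral_integral_swap (integrable_layerKernel_prod hμ)]
  simp only [integral_layerKernel]

variable {ρ : Measure (ℝ × ℝ)}

lemma integrable_layerKernel_mul_prod [SFinite ρ] (h : Integrable (fun w => w.1 * w.2) ρ) :
    Integrable (fun q : (ℝ × ℝ) × (ℝ × ℝ) => layerKernel q.1.1 q.2.1 * layerKernel q.1.2 q.2.2)
      (volume.prod ρ) := by
  rw [integrable_prod_iff' (by fun_prop)]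
  refine ⟨ae_of_all _ fun w => (integrable_layerKernel w.1).mul_prod (integrable_layerKernel w.2),
    ?_⟩
  have hnorm (w : ℝ × ℝ) :
      ∫ p : ℝ × ℝ, ‖layerKernel p.1 w.1 * layerKernel p.2 w.2‖ = |w.1 * w.2| := by
    simp only [norm_mul, abs_mul, ← integral_norm_layerKernel]
    exact integral_prod_mul (μ := volume) (ν := volume) (fun s => ‖layerKernel s w.1‖)
      fun t => ‖layerKernel t w.2‖
  simpa only [hnorm] using! h.abs

lemma integral_integral_layerKernel_mul [SFinite ρ] (h : Integrable (fun w => w.1 * w.2) ρ) :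
    ∫ p : ℝ × ℝ, ∫ w, layerKernel p.1 w.1 * layerKernel p.2 w.2 ∂ρ = ∫ w, w.1 * w.2 ∂ρ := by
  rw [integral_integral_swap (integrable_layerKernel_mul_prod h)]
  refine integral_congr_ae (ae_of_all _ fun w => ?_)
  dsimp only
  rw [Measure.volume_eq_prod, integral_prod_mul (fun s => layerKernel s w.1)
    fun t => layerKernel t w.2, integral_layerKernel, integral_layerKernel]

lemma memLp_layerKernel {Ω : Type*} [MeasurableSpace Ω] {P : Measure Ω} [IsFiniteMeasure P]
    {X : Ω → ℝ} (hX : Measurable X) (s : ℝ) (p : ENNReal) :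
    MemLp (fun w => layerKernel s (X w)) p P := by
  refine MemLp.of_bound
    (measurable_layerKernel measurable_const hX).aestronglyMeasurable 1 (ae_of_all _ fun w => ?_)
  simp only [layerKernel_eq_sub_indicator_Ico, indicator_apply, mem_Ico, Pi.one_apply,
    Real.norm_eq_abs]
  grind

lemma covariance_indicator_one {Ω : Type*} [MeasurableSpace Ω] {P : Measure Ω}
    [IsProbabilityMeasure P] {s t : Set Ω} (hs : MeasurableSet s) (ht : MeasurableSet t) :
    cov[s.indicator 1, t.indicator 1; P] = P.real (s ∩ t) - P.real s * P.real t := by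
  have hmem {u : Set Ω} (hu : MeasurableSet u) : MemLp (u.indicator (1 : Ω → ℝ)) 2 P :=
    memLp_indicator_const 2 hu 1 (.inr (measure_ne_top _ _))
  rw [covariance_eq_sub (hmem hs) (hmem ht), ← inter_indicator_one,
    integral_indicator_one (hs.inter ht), integral_indicator_one hs, integral_indicator_one ht]

lemma covariance_layerKernel [IsProbabilityMeasure ρ] (p : ℝ × ℝ) :
    cov[fun w => layerKernel p.1 w.1, fun w => layerKernel p.2 w.2; ρ] =
      ρ.real (Iic p) - ρ.fst.real (Iic p.1) * ρ.snd.real (Iic p.2) := by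
  have hfst : MeasurableSet (Prod.fst ⁻¹' Iic p.1 : Set (ℝ × ℝ)) := measurable_fst measurableSet_Iic
  have hsnd : MeasurableSet (Prod.snd ⁻¹' Iic p.2 : Set (ℝ × ℝ)) := measurable_snd measurableSet_Iic
  have hint {s : Set (ℝ × ℝ)} (hs : MeasurableSet s) : Integrable (s.indicator (1 : ℝ × ℝ → ℝ)) ρ :=
    (integrable_const 1).indicator hs
  calc cov[fun w => layerKernel p.1 w.1, fun w => layerKernel p.2 w.2; ρ]
      = cov[(Prod.fst ⁻¹' Iic p.1).indicator 1, (Prod.snd ⁻¹' Iic p.2).indicator 1; ρ] :=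
        (covariance_const_sub_left (hint hfst) _).trans
          (neg_eq_iff_eq_neg.2 (covariance_const_sub_right (hint hsnd) _))
    _ = _ := by
        rw [covariance_indicator_one hfst hsnd, ← Set.prod_eq, Iic_prod_Iic,
          ← map_measureReal_apply measurable_fst measurableSet_Iic,
          ← map_measureReal_apply measurable_snd measurableSet_Iic, Measure.fst, Measure.snd]

/-- Hoeffding's covariance formula. -/
lemma covariance_fst_snd_eq_integral [IsProbabilityMeasure ρ]
    (h₁ : MemLp Prod.fst 2 ρ) (h₂ : MemLp Prod.snd 2 ρ) :
    Integrable (fun p : ℝ × ℝ => ρ.real (Iic p) - ρ.fst.real (Iic p.1) * ρ.snd.real (Iic p.2)) ∧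
    cov[Prod.fst, Prod.snd; ρ] =
      ∫ p : ℝ × ℝ, (ρ.real (Iic p) - ρ.fst.real (Iic p.1) * ρ.snd.real (Iic p.2)) := by
  have hmul : Integrable (fun w : ℝ × ℝ => w.1 * w.2) ρ := h₁.integrable_mul h₂
  have hfst : Integrable id ρ.fst :=
    (integrable_map_measure (by fun_prop) (by fun_prop)).2 (h₁.integrable one_le_two)
  have hsnd : Integrable id ρ.snd :=
    (integrable_map_measure (by fun_prop) (by fun_prop)).2 (h₂.integrable one_le_two)
  have hcov (p : ℝ × ℝ) : ρ.real (Iic p) - ρ.fst.real (Iic p.1) * ρ.snd.real (Iic p.2) =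
      ∫ w, layerKernel p.1 w.1 * layerKernel p.2 w.2 ∂ρ -
        (∫ x, layerKernel p.1 x ∂ρ.fst) * ∫ y, layerKernel p.2 y ∂ρ.snd := by
    rw [← covariance_layerKernel, covariance_eq_sub (memLp_layerKernel measurable_fst p.1 2)
      (memLp_layerKernel measurable_snd p.2 2), Measure.fst, Measure.snd,
      integral_map (by fun_prop) (by fun_prop), integral_map (by fun_prop) (by fun_prop)]
    rfl
  have hjoint := (integrable_layerKernel_mul_prod hmul).integral_prod_left
  have hindep := (integrable_layerKernel_prod hfst).integral_prod_left.mul_prod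
    (integrable_layerKernel_prod hsnd).integral_prod_left
  simp only [hcov]
  refine ⟨hjoint.sub hindep, ?_⟩
  rw [integral_sub hjoint hindep, integral_integral_layerKernel_mul hmul, Measure.volume_eq_prod,
    integral_prod_mul (fun s => ∫ x, layerKernel s x ∂ρ.fst) fun t => ∫ y, layerKernel t y ∂ρ.snd,
    integral_integral_layerKernel hfst, integral_integral_layerKernel hsnd,
    covariance_eq_sub h₁ h₂, Measure.fst, Measure.snd,
    integral_map (by fun_prop) (by fun_prop), integral_map (by fun_prop) (by fun_prop)]
  rfl

end Hoeffding

section JointCdf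

lemma tendsto_measure_Iic_nhdsGE {α : Type*} [TopologicalSpace α] [FirstCountableTopology α]
    [Preorder α] [OrderClosedTopology α] [MeasurableSpace α] [OpensMeasurableSpace α]
    (ρ : Measure α) [IsFiniteMeasure ρ] (q : α) :
    Tendsto (fun p => ρ (Iic p)) (𝓝[≥] q) (𝓝 (ρ (Iic q))) := by
  refine tendsto_measure_of_tendsto_indicator_of_isFiniteMeasure _ ρ (fun _ => measurableSet_Iic)
    fun x => ?_
  by_cases hx : x ≤ q
  · filter_upwards [self_mem_nhdsWithin] with p hp
    exact iff_of_true (hx.trans hp) hx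
  · filter_upwards [mem_nhdsWithin_of_mem_nhds (isClosed_Ici.isOpen_compl.mem_nhds hx)] with p hp
    exact iff_of_false hp hx

variable {ρ ρ' : Measure (ℝ × ℝ)}

lemma ext_of_Iic_prod [IsFiniteMeasure ρ] (h : ∀ p, ρ (Iic p) = ρ' (Iic p)) : ρ = ρ' := by
  have half (s : ℝ) {t : Set ℝ} (ht : MeasurableSet t) : ρ (Iic s ×ˢ t) = ρ' (Iic s ×ˢ t) := by
    have hmap : (ρ.restrict (Prod.fst ⁻¹' Iic s)).snd = (ρ'.restrict (Prod.fst ⁻¹' Iic s)).snd := by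
      refine Measure.ext_of_Iic _ _ fun b => ?_
      rw [Measure.snd_apply measurableSet_Iic, Measure.snd_apply measurableSet_Iic,
        Measure.restrict_apply (measurable_snd measurableSet_Iic),
        Measure.restrict_apply (measurable_snd measurableSet_Iic), inter_comm, ← Set.prod_eq,
        Iic_prod_Iic, h]
    simpa only [Measure.snd_apply ht, Measure.restrict_apply (measurable_snd ht),
      inter_comm (Prod.snd ⁻¹' t), ← Set.prod_eq] using DFunLike.congr_fun hmap t
  refine Measure.ext_prod fun {s t} hs ht => ?_
  have hmap : (ρ.restrict (Prod.snd ⁻¹' t)).fst = (ρ'.restrict (Prod.snd ⁻¹' t)).fst := by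
    refine Measure.ext_of_Iic _ _ fun b => ?_
    rw [Measure.fst_apply measurableSet_Iic, Measure.fst_apply measurableSet_Iic,
      Measure.restrict_apply (measurable_fst measurableSet_Iic),
      Measure.restrict_apply (measurable_fst measurableSet_Iic), ← Set.prod_eq, half b ht]
  simpa only [Measure.fst_apply hs, Measure.restrict_apply (measurable_fst hs), ← Set.prod_eq]
    using DFunLike.congr_fun hmap s

lemma ext_of_ae_Iic_prod [IsFiniteMeasure ρ] [IsFiniteMeasure ρ']
    (h : ∀ᵐ p : ℝ × ℝ, ρ (Iic p) = ρ' (Iic p)) : ρ = ρ' := by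
  refine ext_of_Iic_prod fun q => ?_
  have hq : q ∈ closure (Ioi q.1 ×ˢ Ioi q.2) := by
    rw [closure_prod_eq, closure_Ioi, closure_Ioi]
    exact ⟨self_mem_Ici, self_mem_Ici⟩
  have hfreq : ∃ᶠ p in 𝓝[≥] q, ρ (Iic p) = ρ' (Iic p) := by
    refine frequently_nhdsWithin_iff.2 (mem_closure_iff_frequently.1 ?_)
    have hdense := (Measure.dense_of_ae h).open_subset_closure_inter
      (isOpen_Ioi.prod isOpen_Ioi : IsOpen (Ioi q.1 ×ˢ Ioi q.2))
    refine closure_minimal (hdense.trans (closure_mono ?_)) isClosed_closure hq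
    rintro p ⟨⟨h₁, h₂⟩, hp⟩
    exact ⟨hp, h₁.le, h₂.le⟩
  exact tendsto_nhds_unique_of_frequently_eq (tendsto_measure_Iic_nhdsGE ρ q)
    (tendsto_measure_Iic_nhdsGE ρ' q) hfreq

end JointCdf

section Comparison

variable {ρ ρ' : Measure (ℝ × ℝ)} [IsProbabilityMeasure ρ] [IsProbabilityMeasure ρ']

lemma covariance_sub_covariance_eq_integral (h₁ : MemLp id 2 ρ.fst) (h₂ : MemLp id 2 ρ.snd)
    (hfst : ρ.fst = ρ'.fst) (hsnd : ρ.snd = ρ'.snd) :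
    Integrable (fun p => ρ'.real (Iic p) - ρ.real (Iic p)) ∧
    cov[Prod.fst, Prod.snd; ρ'] - cov[Prod.fst, Prod.snd; ρ] =
      ∫ p, (ρ'.real (Iic p) - ρ.real (Iic p)) := by
  obtain ⟨hint, hcov⟩ := covariance_fst_snd_eq_integral (h₁.comp_of_map measurable_fst.aemeasurable)
    (h₂.comp_of_map measurable_snd.aemeasurable)
  rw [hfst] at h₁
  rw [hsnd] at h₂
  obtain ⟨hint', hcov'⟩ := covariance_fst_snd_eq_integral
    (h₁.comp_of_map measurable_fst.aemeasurable) (h₂.comp_of_map measurable_snd.aemeasurable)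
  simp only [hfst, hsnd] at hint hcov
  simp only [hcov, hcov', ← integral_sub hint' hint, sub_sub_sub_cancel_right, and_true]
  simpa only [Pi.sub_def, sub_sub_sub_cancel_right] using hint'.sub hint

lemma covariance_le_of_Iic_le (h₁ : MemLp id 2 ρ.fst) (h₂ : MemLp id 2 ρ.snd)
    (hfst : ρ.fst = ρ'.fst) (hsnd : ρ.snd = ρ'.snd) (hle : ∀ p, ρ (Iic p) ≤ ρ' (Iic p)) :
    cov[Prod.fst, Prod.snd; ρ] ≤ cov[Prod.fst, Prod.snd; ρ'] := by
  rw [← sub_nonneg, (covariance_sub_covariance_eq_integral h₁ h₂ hfst hsnd).2]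
  exact integral_nonneg fun p => sub_nonneg.2 (ENNReal.toReal_mono (measure_ne_top _ _) (hle p))

lemma eq_of_Iic_le_of_covariance_eq (h₁ : MemLp id 2 ρ.fst) (h₂ : MemLp id 2 ρ.snd)
    (hfst : ρ.fst = ρ'.fst) (hsnd : ρ.snd = ρ'.snd) (hle : ∀ p, ρ (Iic p) ≤ ρ' (Iic p))
    (hcov : cov[Prod.fst, Prod.snd; ρ] = cov[Prod.fst, Prod.snd; ρ']) : ρ = ρ' := by
  obtain ⟨hint, hsub⟩ := covariance_sub_covariance_eq_integral h₁ h₂ hfst hsnd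
  have hnonneg (p : ℝ × ℝ) : 0 ≤ ρ'.real (Iic p) - ρ.real (Iic p) :=
    sub_nonneg.2 (ENNReal.toReal_mono (measure_ne_top _ _) (hle p))
  rw [hcov, sub_self, eq_comm, integral_eq_zero_iff_of_nonneg hnonneg hint] at hsub
  refine ext_of_ae_Iic_prod (hsub.mono fun p hp => ?_)
  exact (measureReal_eq_measureReal_iff (by finiteness) (by finiteness)).1 (sub_eq_zero.1 hp).symm

end Comparison

section Quantile

variable {μ : Measure ℝ}

/-- The (lower) quantile function of a probability measure on `ℝ`, with value `0`
outside `(0, 1)`. -/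
noncomputable def quantile (μ : Measure ℝ) : ℝ → ℝ :=
  (Ioo 0 1).indicator fun u => sInf {x | u ≤ cdf μ x}

lemma quantile_le_iff {u : ℝ} (hu : u ∈ Ioo (0 : ℝ) 1) (x : ℝ) :
    quantile μ u ≤ x ↔ u ≤ cdf μ x := by
  rw [quantile, indicator_of_mem hu]
  obtain ⟨b, hb⟩ := ((tendsto_cdf_atTop μ).eventually (lt_mem_nhds hu.2)).exists
  obtain ⟨a, ha⟩ := ((tendsto_cdf_atBot μ).eventually (gt_mem_nhds hu.1)).exists
  have hne : {x | u ≤ cdf μ x}.Nonempty := ⟨b, hb.le⟩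
  have hbdd : BddBelow {x | u ≤ cdf μ x} :=
    ⟨a, fun y hy => ((monotone_cdf μ).reflect_lt (ha.trans_le hy)).le⟩
  refine ⟨fun hx => le_trans ?_ (monotone_cdf μ hx), fun hx => csInf_le hbdd hx⟩
  have hright := ((cdf μ).right_continuous (sInf {x | u ≤ cdf μ x})).tendsto.mono_left
    (nhdsWithin_mono _ Ioi_subset_Ici_self)
  refine ge_of_tendsto hright ?_
  filter_upwards [self_mem_nhdsWithin] with y hy
  obtain ⟨z, hz, hzy⟩ := exists_lt_of_csInf_lt hne hy
  exact le_trans hz (monotone_cdf μ hzy.le)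

@[fun_prop]
lemma measurable_quantile (μ : Measure ℝ) : Measurable (quantile μ) := by
  refine measurable_of_Iic fun x => ?_
  have hpre : quantile μ ⁻¹' Iic x =
      (Ioo 0 1 ∩ Iic (cdf μ x)) ∪ ((Ioo 0 1)ᶜ ∩ {_u | (0 : ℝ) ≤ x}) := by
    ext u
    by_cases hu : u ∈ Ioo (0 : ℝ) 1
    · simp [quantile_le_iff hu, hu]
    · simp [quantile, hu]
  rw [hpre]
  exact (measurableSet_Ioo.inter measurableSet_Iic).union
    (measurableSet_Ioo.compl.inter (MeasurableSet.const _))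

lemma measurable_cdf (μ : Measure ℝ) : Measurable (cdf μ) :=
  (monotone_cdf μ).measurable

lemma continuous_cdf [IsProbabilityMeasure μ] [NullSingletonClass μ] : Continuous (cdf μ) := by
  refine continuous_iff_continuousAt.2 fun x => ?_
  rw [(monotone_cdf μ).continuousAt_iff_leftLim_eq_rightLim, StieltjesFunction.rightLim_eq]
  have hjump : 0 = ENNReal.ofReal (cdf μ x - Function.leftLim (cdf μ) x) := by
    rw [← (cdf μ).measure_singleton x, measure_cdf, measure_singleton]
  exact le_antisymm ((monotone_cdf μ).leftLim_le le_rfl)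
    (sub_nonpos.1 (ENNReal.ofReal_eq_zero.1 hjump.symm))

lemma cdf_quantile [IsProbabilityMeasure μ] [NullSingletonClass μ] {u : ℝ}
    (hu : u ∈ Ioo (0 : ℝ) 1) :
    cdf μ (quantile μ u) = u := by
  refine le_antisymm ?_ ((quantile_le_iff hu _).1 le_rfl)
  refine le_of_tendsto (continuous_cdf.continuousWithinAt (s := Iio (quantile μ u))) ?_
  filter_upwards [self_mem_nhdsWithin] with y hy
  exact (not_le.1 fun h => hy.not_ge ((quantile_le_iff hu y).2 h)).le

/-- The uniform distribution on the unit interval, as a measure on `ℝ`. -/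
noncomputable def unitUniform : Measure ℝ := volume.restrict (Ioo 0 1)

instance : IsProbabilityMeasure unitUniform :=
  ⟨by simp [unitUniform]⟩

lemma ae_unitUniform_mem_Ioo : ∀ᵐ u ∂unitUniform, u ∈ Ioo (0 : ℝ) 1 :=
  ae_restrict_mem measurableSet_Ioo

lemma unitUniform_Iic {r : ℝ} (hr : r ≤ 1) : unitUniform (Iic r) = ENNReal.ofReal r := by
  have hinter : Iic r ∩ Ioc 0 1 = Ioc 0 r := by
    ext u
    simp only [mem_inter_iff, mem_Iic, mem_Ioc]
    grind
  rw [unitUniform, Measure.restrict_congr_set Ioo_ae_eq_Ioc,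
    Measure.restrict_apply measurableSet_Iic, hinter, Real.volume_Ioc, sub_zero]

lemma map_quantile [IsProbabilityMeasure μ] : unitUniform.map (quantile μ) = μ := by
  have : IsProbabilityMeasure (unitUniform.map (quantile μ)) :=
    Measure.isProbabilityMeasure_map (by fun_prop)
  refine Measure.ext_of_Iic _ _ fun x => ?_
  rw [Measure.map_apply (by fun_prop) measurableSet_Iic, ← ofReal_cdf,
    ← unitUniform_Iic (cdf_le_one μ x)]
  refine measure_congr (ae_unitUniform_mem_Ioo.mono fun u hu => ?_)
  exact propext (quantile_le_iff hu x)

lemma map_cdf [IsProbabilityMeasure μ] [NullSingletonClass μ] : μ.map (cdf μ) = unitUniform := by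
  have hcdf : (fun u => cdf μ (quantile μ u)) =ᵐ[unitUniform] id :=
    ae_unitUniform_mem_Ioo.mono fun u hu => cdf_quantile hu
  calc μ.map (cdf μ) = (unitUniform.map (quantile μ)).map (cdf μ) := by rw [map_quantile]
    _ = unitUniform.map (fun u => cdf μ (quantile μ u)) :=
      Measure.map_map (measurable_cdf μ) (by fun_prop)
    _ = unitUniform := (Measure.map_congr hcdf).trans Measure.map_id

lemma ae_quantile_cdf [IsProbabilityMeasure μ] [NullSingletonClass μ] :
    ∀ᵐ x ∂μ, quantile μ (cdf μ x) = x := by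
  have hmeas : Measurable fun x => quantile μ (cdf μ x) :=
    (measurable_quantile μ).comp (measurable_cdf μ)
  suffices h : ∀ᵐ x ∂unitUniform.map (quantile μ), quantile μ (cdf μ x) = x by
    rwa [map_quantile] at h
  refine (ae_map_iff (by fun_prop) (measurableSet_eq_fun hmeas measurable_id')).2 ?_
  filter_upwards [ae_unitUniform_mem_Ioo] with u hu
  rw [cdf_quantile hu]

end Quantile

section Comonotone

variable {ι : Type*} {μ : ι → Measure ℝ}

/-- The law of the pair of coordinates `(x i, x j)` under `l`. -/
noncomputable def pairLaw (l : Measure (ι → ℝ)) (i j : ι) : Measure (ℝ × ℝ) :=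
  l.map fun x => (x i, x j)

instance {l : Measure (ι → ℝ)} [IsProbabilityMeasure l] {i j : ι} :
    IsProbabilityMeasure (pairLaw l i j) :=
  Measure.isProbabilityMeasure_map (by fun_prop)

lemma pairLaw_fst (l : Measure (ι → ℝ)) (i j : ι) : (pairLaw l i j).fst = l.map fun x => x i := by
  rw [pairLaw, Measure.fst_map_prodMk (by fun_prop)]

lemma pairLaw_snd (l : Measure (ι → ℝ)) (i j : ι) : (pairLaw l i j).snd = l.map fun x => x j := by
  rw [pairLaw, Measure.snd_map_prodMk (by fun_prop)]

lemma covariance_eval_eq (l : Measure (ι → ℝ)) (i j : ι) :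
    cov[fun x => x i, fun x => x j; l] = cov[Prod.fst, Prod.snd; pairLaw l i j] := by
  rw [pairLaw, covariance_map (by fun_prop) (by fun_prop) (by fun_prop)]
  rfl

/-- The comonotone coupling of the probability measures `μ i`: the law of the vector of their
quantile functions evaluated at a common uniform variable. -/
noncomputable def comonotoneLaw (μ : ι → Measure ℝ) : Measure (ι → ℝ) :=
  unitUniform.map fun u i => quantile (μ i) u

lemma measurable_quantile_pi : Measurable fun u i => quantile (μ i) u :=
  measurable_pi_lambda _ fun i => measurable_quantile (μ i)

instance : IsProbabilityMeasure (comonotoneLaw μ) :=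
  Measure.isProbabilityMeasure_map measurable_quantile_pi.aemeasurable

variable [∀ i, IsProbabilityMeasure (μ i)]

lemma comonotoneLaw_map_eval (i : ι) : (comonotoneLaw μ).map (fun x => x i) = μ i := by
  rw [comonotoneLaw, Measure.map_map (by fun_prop) measurable_quantile_pi]
  exact map_quantile

lemma pairLaw_comonotoneLaw_Iic (i j : ι) (p : ℝ × ℝ) :
    pairLaw (comonotoneLaw μ) i j (Iic p) = min (μ i (Iic p.1)) (μ j (Iic p.2)) := by
  have hpre : (fun u => (quantile (μ i) u, quantile (μ j) u)) ⁻¹' Iic p =ᵐ[unitUniform]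
      Iic (min (cdf (μ i) p.1) (cdf (μ j) p.2)) :=
    ae_unitUniform_mem_Ioo.mono fun u hu => propext <|
      (and_congr (quantile_le_iff hu _) (quantile_le_iff hu _)).trans le_min_iff.symm
  rw [pairLaw, comonotoneLaw, Measure.map_map (by fun_prop) measurable_quantile_pi,
    Measure.map_apply (by fun_prop) measurableSet_Iic, ← ofReal_cdf, ← ofReal_cdf,
    ← ENNReal.ofReal_min, ← unitUniform_Iic (min_le_of_left_le (cdf_le_one _ _))]
  exact measure_congr hpre

lemma ae_comonotoneLaw_cdf_eq [∀ i, NullSingletonClass (μ i)] (i j : ι) :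
    ∀ᵐ p ∂pairLaw (comonotoneLaw μ) i j, cdf (μ i) p.1 = cdf (μ j) p.2 := by
  have hset : MeasurableSet {p : ℝ × ℝ | cdf (μ i) p.1 = cdf (μ j) p.2} :=
    measurableSet_eq_fun ((measurable_cdf _).comp measurable_fst)
      ((measurable_cdf _).comp measurable_snd)
  rw [pairLaw, comonotoneLaw, Measure.map_map (by fun_prop) measurable_quantile_pi]
  refine (ae_map_iff (by fun_prop) hset).2 ?_
  filter_upwards [ae_unitUniform_mem_Ioo] with u hu
  exact (cdf_quantile hu).trans (cdf_quantile hu).symm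

lemma pairLaw_Iic_le_comonotoneLaw {l : Measure (ι → ℝ)} (hl : ∀ i, l.map (fun x => x i) = μ i)
    (i j : ι) (p : ℝ × ℝ) :
    pairLaw l i j (Iic p) ≤ pairLaw (comonotoneLaw μ) i j (Iic p) := by
  rw [pairLaw_comonotoneLaw_Iic, pairLaw, Measure.map_apply (by fun_prop) measurableSet_Iic,
    ← hl i, ← hl j, Measure.map_apply (by fun_prop) measurableSet_Iic,
    Measure.map_apply (by fun_prop) measurableSet_Iic]
  exact le_min (measure_mono fun x hx => hx.1) (measure_mono fun x hx => hx.2)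

variable {l : Measure (ι → ℝ)} [IsProbabilityMeasure l]

lemma covariance_le_comonotoneLaw (hl : ∀ i, l.map (fun x => x i) = μ i)
    (hμ : ∀ i, MemLp id 2 (μ i)) (i j : ι) :
    cov[fun x => x i, fun x => x j; l] ≤ cov[fun x => x i, fun x => x j; comonotoneLaw μ] := by
  rw [covariance_eval_eq, covariance_eval_eq]
  refine covariance_le_of_Iic_le ?_ ?_ ?_ ?_ (pairLaw_Iic_le_comonotoneLaw hl i j) <;>
    simp only [pairLaw_fst, pairLaw_snd, hl, comonotoneLaw_map_eval, hμ]

lemma pairLaw_eq_of_covariance_eq_comonotoneLaw (hl : ∀ i, l.map (fun x => x i) = μ i)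
    (hμ : ∀ i, MemLp id 2 (μ i)) {i j : ι}
    (hcov : cov[fun x => x i, fun x => x j; l] =
      cov[fun x => x i, fun x => x j; comonotoneLaw μ]) :
    pairLaw l i j = pairLaw (comonotoneLaw μ) i j := by
  rw [covariance_eval_eq, covariance_eval_eq] at hcov
  refine eq_of_Iic_le_of_covariance_eq ?_ ?_ ?_ ?_ (pairLaw_Iic_le_comonotoneLaw hl i j) hcov <;>
    simp only [pairLaw_fst, pairLaw_snd, hl, comonotoneLaw_map_eval, hμ]

variable [∀ i, NullSingletonClass (μ i)]

lemma ae_cdf_eq_of_pairLaw_eq {l : Measure (ι → ℝ)} {i j : ι}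
    (h : pairLaw l i j = pairLaw (comonotoneLaw μ) i j) :
    ∀ᵐ x ∂l, cdf (μ i) (x i) = cdf (μ j) (x j) :=
  ae_of_ae_map (f := fun x : ι → ℝ => (x i, x j)) (by fun_prop)
    (h ▸ ae_comonotoneLaw_cdf_eq i j)

lemma eq_comonotoneLaw_of_ae_cdf_eq [Countable ι]
    (hl : ∀ i, l.map (fun x => x i) = μ i)
    (hcdf : ∀ i j, ∀ᵐ x ∂l, cdf (μ i) (x i) = cdf (μ j) (x j)) : l = comonotoneLaw μ := by
  rcases isEmpty_or_nonempty ι with _ | ⟨⟨i₀⟩⟩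
  · exact Measure.ext fun s _ =>
      Subsingleton.set_cases (p := fun s => l s = comonotoneLaw μ s) (by simp) (by simp) s
  have hquantile (i : ι) : ∀ᵐ x ∂l, quantile (μ i) (cdf (μ i) (x i)) = x i :=
    ae_of_ae_map (f := fun x : ι → ℝ => x i) (p := fun y => quantile (μ i) (cdf (μ i) y) = y)
      (measurable_pi_apply i).aemeasurable (by rw [hl i]; exact ae_quantile_cdf)
  have hcommon : (fun x i => quantile (μ i) (cdf (μ i₀) (x i₀))) =ᵐ[l] id := by
    filter_upwards [ae_all_iff.2 hquantile, ae_all_iff.2 (hcdf i₀)] with x hq hF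
    exact funext fun i => by rw [hF i, hq i]; rfl
  have heval : Measurable fun x : ι → ℝ => cdf (μ i₀) (x i₀) :=
    (measurable_cdf _).comp (measurable_pi_apply i₀)
  have hunif : l.map (fun x => cdf (μ i₀) (x i₀)) = unitUniform := by
    rw [← map_cdf (μ := μ i₀), ← hl i₀, Measure.map_map (measurable_cdf _) (by fun_prop)]
    rfl
  calc l = l.map fun x i => quantile (μ i) (cdf (μ i₀) (x i₀)) :=
        (Measure.map_congr hcommon |>.trans Measure.map_id).symm
    _ = (l.map fun x => cdf (μ i₀) (x i₀)).map fun u i => quantile (μ i) u :=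
        (Measure.map_map measurable_quantile_pi heval).symm
    _ = comonotoneLaw μ := by rw [hunif, comonotoneLaw]

lemma eq_comonotoneLaw_of_connected [Countable ι]
    (hl : ∀ i, l.map (fun x => x i) = μ i) (hμ : ∀ i, MemLp id 2 (μ i)) {r : ι → ι → Prop}
    (hr : ∀ i j, Relation.ReflTransGen r i j)
    (hcov : ∀ i j, r i j →
      cov[fun x => x i, fun x => x j; l] = cov[fun x => x i, fun x => x j; comonotoneLaw μ]) :
    l = comonotoneLaw μ := by
  refine eq_comonotoneLaw_of_ae_cdf_eq hl fun i j => ?_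
  induction hr i j with
  | refl => exact ae_of_all _ fun _ => rfl
  | tail _ hrjk ih =>
    filter_upwards [ih, ae_cdf_eq_of_pairLaw_eq
      (pairLaw_eq_of_covariance_eq_comonotoneLaw hl hμ (hcov _ _ hrjk))] with x h₁ h₂
    exact h₁.trans h₂

end Comonotone

section Martingale

lemma covariance_condExp_right {Ω : Type*} {m m₀ : MeasurableSpace Ω} {P : Measure Ω}
    [IsProbabilityMeasure P] (hm : m ≤ m₀) {f g h : Ω → ℝ} (hf : StronglyMeasurable[m] f)
    (hf2 : MemLp f 2 P) (hg2 : MemLp g 2 P) (hgh : P[g | m] =ᵐ[P] h) :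
    cov[f, h; P] = cov[f, g; P] := by
  have hh2 : MemLp h 2 P := (memLp_congr_ae hgh).1 (hg2.condExp one_le_two)
  have hfg : P[f * g | m] =ᵐ[P] f * h :=
    (condExp_mul_of_stronglyMeasurable_left hf (hf2.integrable_mul hg2)
      (hg2.integrable one_le_two)).trans (EventuallyEq.rfl.mul hgh)
  rw [covariance_eq_sub hf2 hh2, covariance_eq_sub hf2 hg2, ← integral_congr_ae hfg,
    ← integral_congr_ae hgh, integral_condExp hm, integral_condExp hm]

lemma covariance_le_of_variance_eq_sq_mul {Ω : Type*} {m₀ : MeasurableSpace Ω} {P : Measure Ω}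
    [IsFiniteMeasure P] {X Y : Ω → ℝ} (hX : MemLp X 2 P) (hY : MemLp Y 2 P) {a b v : ℝ}
    (ha : 0 < a) (hb : 0 < b) (hVX : Var[X; P] = a ^ 2 * v) (hVY : Var[Y; P] = b ^ 2 * v) :
    cov[X, Y; P] ≤ a * b * v := by
  have hvar : 0 ≤ Var[fun w => b * X w - a * Y w; P] := variance_nonneg _ _
  rw [variance_fun_sub (hX.const_mul b) (hY.const_mul a), variance_const_mul, variance_const_mul,
    covariance_const_mul_left, covariance_const_mul_right, hVX, hVY] at hvar
  refine le_of_mul_le_mul_left ?_ (mul_pos (mul_pos two_pos ha) hb)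
  linarith

variable {d : ℕ} {μ ν : Fin d → Measure ℝ} {π : Measure (Vec d × Vec d)}

lemma stronglyMeasurable_comap_fst_apply {E : Type*} (i : Fin d) :
    StronglyMeasurable[MeasurableSpace.comap Prod.fst inferInstance] fun p : Vec d × E => p.1 i :=
  ((measurable_pi_apply i).comp (comap_measurable Prod.fst)).stronglyMeasurable

lemma PairMartSet.memLp_snd (hπ : π ∈ PairMartSet μ ν) {i : Fin d} (hν : MemLp id 2 (ν i)) :
    MemLp (fun p => p.2 i) 2 π :=
  (hπ.2.2.1 i ▸ hν).comp_of_map (by fun_prop)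

lemma PairMartSet.memLp_fst (hπ : π ∈ PairMartSet μ ν) {i : Fin d} (hν : MemLp id 2 (ν i)) :
    MemLp (fun p => p.1 i) 2 π :=
  have := hπ.1
  (memLp_congr_ae (hπ.2.2.2 i)).1 ((PairMartSet.memLp_snd hπ hν).condExp one_le_two)

lemma PairMartSet.covariance_fst_snd (hπ : π ∈ PairMartSet μ ν) (hν : ∀ i, MemLp id 2 (ν i))
    (i j : Fin d) :
    cov[fun p => p.1 i, fun p => p.2 j; π] = cov[fun p => p.1 i, fun p => p.1 j; π] :=
  have := hπ.1
  (covariance_condExp_right measurable_fst.comap_le (stronglyMeasurable_comap_fst_apply i)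
    (PairMartSet.memLp_fst hπ (hν i)) (PairMartSet.memLp_snd hπ (hν j)) (hπ.2.2.2 j)).symm

lemma PairMartSet.covariance_snd (hπ : π ∈ PairMartSet μ ν) (hν : ∀ i, MemLp id 2 (ν i))
    (i j : Fin d) :
    cov[fun p => p.2 i, fun p => p.2 j; π] = cov[fun p => p.1 i, fun p => p.1 j; π] +
      cov[fun p => p.2 i - p.1 i, fun p => p.2 j - p.1 j; π] := by
  have := hπ.1
  have hX i := PairMartSet.memLp_fst hπ (hν i)
  have hY i := PairMartSet.memLp_snd hπ (hν i)
  have hYX : cov[fun p => p.2 i, fun p => p.1 j; π] = cov[fun p => p.1 i, fun p => p.1 j; π] := by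
    rw [covariance_comm, PairMartSet.covariance_fst_snd hπ hν, covariance_comm]
  rw [covariance_fun_sub_fun_sub (hY i) (hX i) (hY j) (hX j), hYX,
    PairMartSet.covariance_fst_snd hπ hν]
  ring

lemma covariance_fst_eq_map_fst (π : Measure (Vec d × Vec d)) (i j : Fin d) :
    cov[fun p => p.1 i, fun p => p.1 j; π] = cov[fun x => x i, fun x => x j; π.map Prod.fst] := by
  rw [covariance_map (measurable_pi_apply i).aestronglyMeasurable
    (measurable_pi_apply j).aestronglyMeasurable (by fun_prop)]
  rfl

lemma PairMartSet.map_fst_map_eval (hπ : π ∈ PairMartSet μ ν) (i : Fin d) :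
    (π.map Prod.fst).map (fun x => x i) = μ i := by
  rw [Measure.map_map (by fun_prop) measurable_fst, ← hπ.2.1 i]
  rfl

lemma PairMartSet.isProbabilityMeasure_fst_marginal (hπ : π ∈ PairMartSet μ ν) (i : Fin d) :
    IsProbabilityMeasure (μ i) :=
  have := hπ.1
  hπ.2.1 i ▸ Measure.isProbabilityMeasure_map (by fun_prop)

lemma PairMartSet.memLp_fst_marginal (hπ : π ∈ PairMartSet μ ν) {i : Fin d}
    (hν : MemLp id 2 (ν i)) : MemLp id 2 (μ i) := by
  rw [← hπ.2.1 i]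
  exact (memLp_map_measure_iff aestronglyMeasurable_id (by fun_prop)).2
    (PairMartSet.memLp_fst hπ hν)

end Martingale

section LinearIncrement

variable {d : ℕ} {μ ν : Fin d → Measure ℝ} {a : Fin d → ℝ} {κ : Measure ℝ} {l : Measure (Vec d)}

/-- The law of `(X, X + Z a)` for independent `X ∼ l` and `Z ∼ κ`: the increments in the different
coordinates are proportional to the same variable. -/
noncomputable def linearIncrementCoupling (l : Measure (Vec d)) (κ : Measure ℝ) (a : Fin d → ℝ) :
    Measure (Vec d × Vec d) :=
  (l.prod κ).map fun q => (q.1, fun i => q.1 i + a i * q.2)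

instance [IsProbabilityMeasure l] [IsProbabilityMeasure κ] :
    IsProbabilityMeasure (linearIncrementCoupling l κ a) :=
  Measure.isProbabilityMeasure_map (by fun_prop)

lemma linearIncrementCoupling_map_fst [IsProbabilityMeasure κ] :
    (linearIncrementCoupling l κ a).map Prod.fst = l := by
  rw [linearIncrementCoupling, Measure.map_map measurable_fst (by fun_prop)]
  exact measurePreserving_fst.map_eq

lemma linearIncrementCoupling_map_snd_apply [SFinite l] [SFinite κ] (i : Fin d) :
    (linearIncrementCoupling l κ a).map (fun p => p.2 i) =
      ((l.map fun x => x i).prod (κ.map fun z => a i * z)).map fun p => p.1 + p.2 := by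
  rw [linearIncrementCoupling, Measure.map_map (by fun_prop) (by fun_prop),
    Measure.map_prod_map _ _ (by fun_prop) (by fun_prop),
    Measure.map_map (by fun_prop) (by fun_prop)]
  rfl

lemma covariance_linearIncrementCoupling [IsProbabilityMeasure l] [IsProbabilityMeasure κ]
    (i j : Fin d) :
    cov[fun p => p.2 i - p.1 i, fun p => p.2 j - p.1 j; linearIncrementCoupling l κ a] =
      a i * a j * Var[id; κ] := by
  have hsnd : (l.prod κ).map Prod.snd = κ := measurePreserving_snd.map_eq
  rw [linearIncrementCoupling, covariance_map (by fun_prop) (by fun_prop) (by fun_prop)]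
  simp only [Function.comp_def, add_sub_cancel_left]
  rw [covariance_const_mul_left, covariance_const_mul_right, ← covariance_self aemeasurable_id,
    mul_assoc]
  conv_rhs => rw [← hsnd, covariance_map (by fun_prop) (by fun_prop) (by fun_prop)]
  rfl

lemma condExp_linearIncrementCoupling [IsProbabilityMeasure l] [IsProbabilityMeasure κ]
    {i : Fin d} (hl : Integrable (fun x => x i) l) (hκ : Integrable (fun z => z) κ)
    (hκ₀ : ∫ z, z ∂κ = 0) :
    (linearIncrementCoupling l κ a)[fun p => p.2 i | MeasurableSpace.comap Prod.fst inferInstance]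
      =ᵐ[linearIncrementCoupling l κ a] fun p => p.1 i := by
  have hX : Integrable (fun q : Vec d × ℝ => q.1 i) (l.prod κ) := hl.comp_fst κ
  have hZ : Integrable (fun q : Vec d × ℝ => a i * q.2) (l.prod κ) := (hκ.comp_snd l).const_mul _
  have hY : Integrable (fun p => p.2 i) (linearIncrementCoupling l κ a) :=
    (integrable_map_measure (by fun_prop) (by fun_prop)).2 (hX.add hZ)
  have hX' : Integrable (fun p => p.1 i) (linearIncrementCoupling l κ a) :=
    (integrable_map_measure (by fun_prop) (by fun_prop)).2 hX
  refine (ae_eq_condExp_of_forall_setIntegral_eq measurable_fst.comap_le hY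
    (fun _ _ _ => hX'.integrableOn) ?_
    (stronglyMeasurable_comap_fst_apply i).aestronglyMeasurable).symm
  rintro _ ⟨B, hB, rfl⟩ -
  have hincrement : ∫ q in B ×ˢ univ, a i * q.2 ∂(l.prod κ) = 0 := by
    rw [setIntegral_prod_mul (fun _ : Vec d => a i) fun z => z, setIntegral_univ, hκ₀, mul_zero]
  rw [linearIncrementCoupling, setIntegral_map (measurable_fst hB) (by fun_prop) (by fun_prop),
    setIntegral_map (measurable_fst hB) (by fun_prop) (by fun_prop)]
  have hpre : (fun q : Vec d × ℝ => (q.1, fun i => q.1 i + a i * q.2)) ⁻¹' (Prod.fst ⁻¹' B) =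
      B ×ˢ univ := prod_univ.symm
  dsimp only
  rw [hpre, integral_add hX.integrableOn hZ.integrableOn, hincrement, add_zero]

lemma linearIncrementCoupling_mem_pairMartSet [IsProbabilityMeasure l]
    (hl : ∀ i, l.map (fun x => x i) = μ i) (hμ : ∀ i, Integrable id (μ i)) (hLIM : LIM μ ν a κ) :
    linearIncrementCoupling l κ a ∈ PairMartSet μ ν := by
  obtain ⟨_, hκ, hκ₀, -, hν⟩ := hLIM
  refine ⟨inferInstance, fun i => ?_, fun i => ?_, fun i => ?_⟩
  · rw [← hl i, ← linearIncrementCoupling_map_fst (l := l) (κ := κ) (a := a),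
      Measure.map_map (by fun_prop) measurable_fst, linearIncrementCoupling_map_fst]
    rfl
  · rw [linearIncrementCoupling_map_snd_apply, hl i, hν i]
  · exact condExp_linearIncrementCoupling ((hl i ▸ hμ i).comp_measurable (by fun_prop)) hκ hκ₀

end LinearIncrement

section Optimality

variable {d : ℕ} {μ ν : Fin d → Measure ℝ} {a : Fin d → ℝ} {κ : Measure ℝ}
  {π π' : Measure (Vec d × Vec d)} {c : Fin d → Fin d → ℝ}

lemma PairMartSet.variance_increment (hπ : π ∈ PairMartSet μ ν) (hν : ∀ i, MemLp id 2 (ν i))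
    (hLIM : LIM μ ν a κ) (i : Fin d) :
    Var[fun p => p.2 i - p.1 i; π] = a i ^ 2 * Var[id; κ] := by
  have := hπ.1
  have := hLIM.1
  have := PairMartSet.isProbabilityMeasure_fst_marginal hπ
  have : IsProbabilityMeasure (π.map Prod.fst) := Measure.isProbabilityMeasure_map (by fun_prop)
  have hσ : linearIncrementCoupling (π.map Prod.fst) κ a ∈ PairMartSet μ ν :=
    linearIncrementCoupling_mem_pairMartSet (PairMartSet.map_fst_map_eval hπ)
      (fun i => (PairMartSet.memLp_fst_marginal hπ (hν i)).integrable one_le_two) hLIM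
  have hsnd {σ : Measure (Vec d × Vec d)} (hσ : σ ∈ PairMartSet μ ν) :
      cov[fun p => p.2 i, fun p => p.2 i; σ] = Var[id; ν i] := by
    rw [covariance_self (by fun_prop), ← hσ.2.2.1 i, variance_id_map (by fun_prop)]
  have hdecomp := (hsnd hπ).trans (hsnd hσ).symm
  rw [PairMartSet.covariance_snd hπ hν, PairMartSet.covariance_snd hσ hν,
    covariance_linearIncrementCoupling, covariance_fst_eq_map_fst, covariance_fst_eq_map_fst,
    linearIncrementCoupling_map_fst, add_right_inj, covariance_self (by fun_prop)] at hdecomp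
  rw [hdecomp, sq]

lemma PairMartSet.covariance_snd_le (hπ : π ∈ PairMartSet μ ν) (hν : ∀ i, MemLp id 2 (ν i))
    (ha : ∀ i, 0 < a i) (hLIM : LIM μ ν a κ) (i j : Fin d) :
    cov[fun p => p.2 i, fun p => p.2 j; π] ≤
      cov[fun x => x i, fun x => x j; π.map Prod.fst] + a i * a j * Var[id; κ] := by
  have := hπ.1
  have hinc i : MemLp (fun p => p.2 i - p.1 i) 2 π :=
    (PairMartSet.memLp_snd hπ (hν i)).sub (PairMartSet.memLp_fst hπ (hν i))
  rw [PairMartSet.covariance_snd hπ hν, covariance_fst_eq_map_fst]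
  gcongr
  exact covariance_le_of_variance_eq_sq_mul (hinc i) (hinc j) (ha i) (ha j)
    (PairMartSet.variance_increment hπ hν hLIM i) (PairMartSet.variance_increment hπ hν hLIM j)

lemma covariance_snd_linearIncrementCoupling {l : Measure (Vec d)} [IsProbabilityMeasure l]
    [IsProbabilityMeasure κ] (hmem : linearIncrementCoupling l κ a ∈ PairMartSet μ ν)
    (hν : ∀ i, MemLp id 2 (ν i)) (i j : Fin d) :
    cov[fun p => p.2 i, fun p => p.2 j; linearIncrementCoupling l κ a] =
      cov[fun x => x i, fun x => x j; l] + a i * a j * Var[id; κ] := by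
  rw [PairMartSet.covariance_snd hmem hν, covariance_fst_eq_map_fst,
    linearIncrementCoupling_map_fst, covariance_linearIncrementCoupling]

lemma integral_covCost (hπ : π ∈ PairMartSet μ ν) (hν : ∀ i, MemLp id 2 (ν i)) :
    ∫ p, covCost c p.2 ∂π = ∑ i, ∑ j, if i < j then
      c i j * (cov[fun p => p.2 i, fun p => p.2 j; π] + (∫ y, y ∂ν i) * ∫ y, y ∂ν j) else 0 := by
  have := hπ.1
  have hY i := PairMartSet.memLp_snd hπ (hν i)
  have hint (i j : Fin d) :
      Integrable (fun p => if i < j then c i j * p.2 i * p.2 j else 0) π := by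
    split_ifs
    · simpa only [mul_assoc, Pi.mul_apply] using ((hY i).integrable_mul (hY j)).const_mul (c i j)
    · exact integrable_zero _ _ _
  have hmean (i : Fin d) : ∫ y, y ∂ν i = ∫ p, p.2 i ∂π := by
    rw [← hπ.2.2.1 i, integral_map (by fun_prop) (by fun_prop)]
  simp only [covCost]
  rw [integral_finsetSum _ fun i _ => integrable_finsetSum _ fun j _ => hint i j]
  refine Finset.sum_congr rfl fun i _ => ?_
  rw [integral_finsetSum _ fun j _ => hint i j]
  refine Finset.sum_congr rfl fun j _ => ?_
  split_ifs
  · rw [covariance_eq_sub (hY i) (hY j), hmean, hmean, sub_add_cancel, ← integral_const_mul]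
    simp only [Pi.mul_apply, mul_assoc]
  · exact integral_zero _ _

lemma covariance_snd_eq_of_adjRel (hπ : π ∈ PairMartSet μ ν) (hπ' : π' ∈ PairMartSet μ ν)
    (hν : ∀ i, MemLp id 2 (ν i)) (hc : ∀ i j, i < j → 0 ≤ c i j)
    (hle : ∀ i j, cov[fun p => p.2 i, fun p => p.2 j; π] ≤ cov[fun p => p.2 i, fun p => p.2 j; π'])
    (hcost : ∫ p, covCost c p.2 ∂π' ≤ ∫ p, covCost c p.2 ∂π) {i j : Fin d} (hij : AdjRel c i j) :
    cov[fun p => p.2 i, fun p => p.2 j; π] = cov[fun p => p.2 i, fun p => p.2 j; π'] := by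
  wlog hlt : i < j generalizing i j
  · have heq := this hij.symm (hij.resolve_left fun h => hlt h.1).1
    rwa [covariance_comm, covariance_comm (fun p : Vec d × Vec d => p.2 j)] at heq
  have hterm (i j : Fin d) :
      (if i < j then c i j *
        (cov[fun p => p.2 i, fun p => p.2 j; π] + (∫ y, y ∂ν i) * ∫ y, y ∂ν j) else 0) ≤
      if i < j then c i j *
        (cov[fun p => p.2 i, fun p => p.2 j; π'] + (∫ y, y ∂ν i) * ∫ y, y ∂ν j) else 0 := by
    split_ifs with h
    · exact mul_le_mul_of_nonneg_left (by gcongr; exact hle i j) (hc i j h)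
    · exact le_rfl
  rw [integral_covCost hπ hν, integral_covCost hπ' hν] at hcost
  have hrow (i : Fin d) := Finset.sum_le_sum fun j (_ : j ∈ Finset.univ) => hterm i j
  have hsum := le_antisymm (Finset.sum_le_sum fun i _ => hrow i) hcost
  have hrow_eq := (Finset.sum_eq_sum_iff_of_le fun i _ => hrow i).1 hsum i (Finset.mem_univ i)
  have heq := (Finset.sum_eq_sum_iff_of_le fun j _ => hterm i j).1 hrow_eq j (Finset.mem_univ j)
  rw [if_pos hlt, if_pos hlt] at heq
  have hpos : 0 < c i j := (hij.resolve_right fun h => h.1.not_gt hlt).2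
  exact add_right_cancel (mul_left_cancel₀ hpos.ne' heq)

end Optimality

lemma IsMaximizer.covariance_fst_eq_comonotoneLaw {d : ℕ} {μ ν : Fin d → Measure ℝ}
    (hν : ∀ i, MemLp id 2 (ν i)) {c : Fin d → Fin d → ℝ} (hc : ∀ i j, i < j → 0 ≤ c i j)
    {a : Fin d → ℝ} (ha : ∀ i, 0 < a i) {κ : Measure ℝ} (hLIM : LIM μ ν a κ)
    {π : Measure (Vec d × Vec d)} (hπ : IsMaximizer μ ν c π) {i j : Fin d} (hij : AdjRel c i j) :
    cov[fun x => x i, fun x => x j; π.map Prod.fst] =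
      cov[fun x => x i, fun x => x j; comonotoneLaw μ] := by
  obtain ⟨hmem, hmax⟩ := hπ
  have := hLIM.1
  have := hmem.1
  have := PairMartSet.isProbabilityMeasure_fst_marginal hmem
  have : IsProbabilityMeasure (π.map Prod.fst) := Measure.isProbabilityMeasure_map (by fun_prop)
  have hμ i : MemLp id 2 (μ i) := PairMartSet.memLp_fst_marginal hmem (hν i)
  have hσ : linearIncrementCoupling (comonotoneLaw μ) κ a ∈ PairMartSet μ ν :=
    linearIncrementCoupling_mem_pairMartSet comonotoneLaw_map_eval
      (fun i => (hμ i).integrable one_le_two) hLIM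
  have hX := covariance_le_comonotoneLaw (PairMartSet.map_fst_map_eval hmem) hμ
  have hbound := PairMartSet.covariance_snd_le hmem hν ha hLIM
  have hle (i j : Fin d) := calc
    cov[fun p => p.2 i, fun p => p.2 j; π]
      ≤ cov[fun x => x i, fun x => x j; π.map Prod.fst] + a i * a j * Var[id; κ] := hbound i j
    _ ≤ cov[fun x => x i, fun x => x j; comonotoneLaw μ] + a i * a j * Var[id; κ] := by
      gcongr; exact hX i j
    _ = cov[fun p => p.2 i, fun p => p.2 j; linearIncrementCoupling (comonotoneLaw μ) κ a] :=
      (covariance_snd_linearIncrementCoupling hσ hν i j).symm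
  have heq := covariance_snd_eq_of_adjRel hmem hσ hν hc hle (hmax _ hσ) hij
  refine le_antisymm (hX i j) (le_of_add_le_add_right (a := a i * a j * Var[id; κ]) ?_)
  rw [← covariance_snd_linearIncrementCoupling hσ hν, ← heq]
  exact hbound i j

theorem mmot_covariance_unique_first_marginal_general {d : ℕ} {μ ν : Fin d → Measure ℝ}
    (hν2 : ∀ i, Integrable (fun x : ℝ => x ^ 2) (ν i)) (hcont : ∀ i (x : ℝ), μ i {x} = 0)
    {c : Fin d → Fin d → ℝ} (hc : ∀ i j, i < j → 0 ≤ c i j)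
    (hconn : ∀ i j : Fin d, Relation.ReflTransGen (AdjRel c) i j)
    {a : Fin d → ℝ} (ha : ∀ i, 0 < a i) {κ : Measure ℝ} (hLIM : LIM μ ν a κ)
    {π : Measure (Vec d × Vec d)} (hπ : IsMaximizer μ ν c π) :
    π.map Prod.fst = comonotoneLaw μ := by
  have := hπ.1.1
  have : IsProbabilityMeasure (π.map Prod.fst) := Measure.isProbabilityMeasure_map (by fun_prop)
  have := PairMartSet.isProbabilityMeasure_fst_marginal hπ.1
  have (i : Fin d) : NullSingletonClass (μ i) := ⟨hcont i⟩
  have hν i : MemLp id 2 (ν i) :=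
    (memLp_two_iff_integrable_sq aestronglyMeasurable_id).2 (hν2 i)
  exact eq_comonotoneLaw_of_connected (PairMartSet.map_fst_map_eval hπ.1)
    (fun i => PairMartSet.memLp_fst_marginal hπ.1 (hν i)) hconn
    fun i j hij => IsMaximizer.covariance_fst_eq_comonotoneLaw hν hc ha hLIM hπ hij

/-- uniqueness of the first marginal of MMOT maximizers for `d ∈ {2,3}`.
Under LIM marginals, a connected nonnegative coefficient graph and atomless first marginals,
all maximizers of the covariance MMOT problem share the same first `d`-dimensional
marginal. -/
theorem mmot_covariance_unique_first_marginal {d : ℕ} (hd : d = 2 ∨ d = 3)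
    (μ ν : Fin d → Measure ℝ)
    (hμprob : ∀ i, IsProbabilityMeasure (μ i)) (hνprob : ∀ i, IsProbabilityMeasure (ν i))
    (hμ2 : ∀ i, Integrable (fun x : ℝ => x ^ 2) (μ i))
    (hν2 : ∀ i, Integrable (fun x : ℝ => x ^ 2) (ν i))
    (hcont : ∀ i (x : ℝ), μ i {x} = 0)
    (c : Fin d → Fin d → ℝ) (hc : ∀ i j, i < j → 0 ≤ c i j)
    (hconn : ∀ i j : Fin d, Relation.ReflTransGen (AdjRel c) i j)
    (a : Fin d → ℝ) (ha : ∀ i, 0 < a i)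
    (κ : Measure ℝ) (hLIM : LIM μ ν a κ)
    (π π' : Measure (Vec d × Vec d))
    (hπ : IsMaximizer μ ν c π) (hπ' : IsMaximizer μ ν c π') :
    π.map Prod.fst = π'.map Prod.fst := by
  exact (mmot_covariance_unique_first_marginal_general hν2 hcont hc hconn ha hLIM hπ).trans
    (mmot_covariance_unique_first_marginal_general hν2 hcont hc hconn ha hLIM hπ').symm

end MMOT
end

section
/- Let μ̌ⁿ = (μ^n_{t,i}) be a sequence of marginal systems and (ε_n)_{n≥1} ⊂ ℝ₊ be such that ℳ_{ε_n}(μ̌ⁿ) ≠ ∅ for all n and μ^n_{t,i} → μ_{t,i} in 𝒲₁ for every t ≤ T, i ≤ d, with ε_n → 0. Then any sequence (π_n)_{n≥1} with π_n ∈ ℳ_{ε_n}(μ̌ⁿ) is tight, and every weak limit point π of (π_n)_{n≥1} belongs to ℳ(μ̌); moreover along any weakly convergent subsequence the convergence π_{n_k} → π holds in Wasserstein-1 on 𝒫(𝒳). -/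
open MeasureTheory Filter

namespace MMOT

/-- Path space `𝒳 = (ℝ^d)^T`. -/
abbrev Path (T d : ℕ) := Fin T → Fin d → ℝ

/-- σ-algebra generated by the coordinates `X_0, …, X_t` (0-indexed). -/
noncomputable def pastSigma (T d : ℕ) (t : ℕ) : MeasurableSpace (Path T d) :=
  ⨆ s : Fin T, ⨆ _ : (s : ℕ) ≤ t, MeasurableSpace.comap (fun x => x s) inferInstance

def HasMarginals {T d : ℕ} (π : Measure (Path T d)) (μ : Fin T → Fin d → Measure ℝ) : Prop :=
  ∀ t i, π.map (fun x => x t i) = μ t i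

/-- `E_π[X_{t+1,i} | X_0,…,X_t]`. -/
noncomputable def condNext {T d : ℕ} (π : Measure (Path T d)) (t : ℕ) (ht : t + 1 < T)
    (i : Fin d) : Path T d → ℝ :=
  π[fun x => x ⟨t + 1, ht⟩ i | pastSigma T d t]

def IsMartingaleMeasure {T d : ℕ} (π : Measure (Path T d)) : Prop :=
  ∀ (t : ℕ) (ht : t + 1 < T) (i : Fin d),
    condNext π t ht i =ᵐ[π] fun x => x ⟨t, Nat.lt_of_succ_lt ht⟩ i

/-- The set `ℳ(μ̌)` of calibrated martingale measures. -/
def MartSet {T d : ℕ} (μ : Fin T → Fin d → Measure ℝ) : Set (Measure (Path T d)) :=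
  {π | IsProbabilityMeasure π ∧ HasMarginals π μ ∧ IsMartingaleMeasure π}

/-- The relaxed set `ℳ_ε(μ̌)`: calibrated measures whose martingale defect is at most `ε`. -/
def MartSetEps {T d : ℕ} (μ : Fin T → Fin d → Measure ℝ) (ε : ℝ) :
    Set (Measure (Path T d)) :=
  {π | IsProbabilityMeasure π ∧ HasMarginals π μ ∧
    ∀ (t : ℕ) (ht : t + 1 < T),
      ∫ x, ∑ i, |condNext π t ht i x - x ⟨t, Nat.lt_of_succ_lt ht⟩ i| ∂π ≤ ε}

def primalVals {T d : ℕ} (c : Path T d → ℝ) (S : Set (Measure (Path T d))) : Set ℝ :=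
  {r | ∃ π ∈ S, Integrable c π ∧ r = ∫ x, c x ∂π}

noncomputable def PbarEps {T d : ℕ} (μ : Fin T → Fin d → Measure ℝ) (c : Path T d → ℝ)
    (ε : ℝ) : ℝ :=
  sSup (primalVals c (MartSetEps μ ε))

noncomputable def PlowEps {T d : ℕ} (μ : Fin T → Fin d → Measure ℝ) (c : Path T d → ℝ)
    (ε : ℝ) : ℝ :=
  sInf (primalVals c (MartSetEps μ ε))

noncomputable def Pbar {T d : ℕ} (μ : Fin T → Fin d → Measure ℝ) (c : Path T d → ℝ) : ℝ :=
  sSup (primalVals c (MartSet μ))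

noncomputable def Plow {T d : ℕ} (μ : Fin T → Fin d → Measure ℝ) (c : Path T d → ℝ) : ℝ :=
  sInf (primalVals c (MartSet μ))

/-- Wasserstein-1 distance on probability measures on `ℝ`. -/
noncomputable def W1R (μ ν : Measure ℝ) : ℝ :=
  sInf {r | ∃ γ : Measure (ℝ × ℝ), IsProbabilityMeasure γ ∧ γ.map Prod.fst = μ ∧
    γ.map Prod.snd = ν ∧ Integrable (fun p => |p.1 - p.2|) γ ∧
    r = ∫ p, |p.1 - p.2| ∂γ}

/-- Lipschitz continuity with respect to the `ℓ¹`-norm on the path space. -/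
def LipschitzCost {T d : ℕ} (L : ℝ) (c : Path T d → ℝ) : Prop :=
  ∀ x y, |c x - c y| ≤ L * ∑ t, ∑ i, |x t i - y t i|

/-- Weak convergence of a sequence of measures (testing against bounded continuous functions). -/
def WeakTendsto {T d : ℕ} (πs : ℕ → Measure (Path T d)) (π : Measure (Path T d)) : Prop :=
  ∀ f : BoundedContinuousFunction (Path T d) ℝ,
    Tendsto (fun n => ∫ x, f x ∂(πs n)) atTop (nhds (∫ x, f x ∂π))

/-- Tightness of a sequence of measures. -/
def Tight {T d : ℕ} (πs : ℕ → Measure (Path T d)) : Prop :=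
  ∀ δ : ℝ, 0 < δ → ∃ K : Set (Path T d), IsCompact K ∧ ∀ n, πs n Kᶜ ≤ ENNReal.ofReal δ

/-- Wasserstein-1 distance on measures on the path space, for the `ℓ¹`-norm. -/
noncomputable def W1Path (T d : ℕ) (μ ν : Measure (Path T d)) : ℝ :=
  sInf {r | ∃ γ : Measure (Path T d × Path T d), IsProbabilityMeasure γ ∧
    γ.map Prod.fst = μ ∧ γ.map Prod.snd = ν ∧
    Integrable (fun p => ∑ t, ∑ i, |p.1 t i - p.2 t i|) γ ∧
    r = ∫ p, ∑ t, ∑ i, |p.1 t i - p.2 t i| ∂γ}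

/-!
Convergence of the marginals in `𝒲₁` entails convergence of their first absolute moments, and the
integral of `‖x‖₁` against `π_n` is the sum of those moments. Hence these integrals are bounded,
which gives tightness by Markov's inequality; along a weakly convergent subsequence they converge
to the integral against the limit, so that weak convergence extends from bounded to continuous
functions of linear growth. Each of the two remaining claims is a convergence of such integrals.

* For a continuous function `g` of the past with `|g| ≤ 1`, the integral of `g · (X_{t+1} - X_t)`
  against `π_n` is at most `ε_n` in absolute value, so it vanishes in the limit, and these test
  functions detect the conditional expectation.
* There are couplings of `π_n` and `π` that converge weakly to the diagonal coupling of `π`: cut the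
  space into small pieces by a partition of unity and match the masses piece by piece. Their cost
  `‖x - y‖₁ ≤ ‖x‖₁ + ‖y‖₁` has linear growth and vanishes on the diagonal.
-/

open Set Topology
open scoped ENNReal NNReal

section Coupling

variable {E F : Type*} [MeasurableSpace E] [MeasurableSpace F]

/-- Couplings of two measures: measures on the product with the given marginals. -/
structure IsCoupling (γ : Measure (E × F)) (μ : Measure E) (ν : Measure F) : Prop where
  fst_eq : γ.map Prod.fst = μ
  snd_eq : γ.map Prod.snd = ν

lemma isCoupling_prod (μ : Measure E) (ν : Measure F) [IsProbabilityMeasure μ]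
    [IsProbabilityMeasure ν] : IsCoupling (μ.prod ν) μ ν :=
  ⟨by simp, by simp⟩

lemma isCoupling_map_diag (μ : Measure E) : IsCoupling (μ.map fun x => (x, x)) μ μ where
  fst_eq := by rw [Measure.map_map measurable_fst (by fun_prop)]; exact Measure.map_id
  snd_eq := by rw [Measure.map_map measurable_snd (by fun_prop)]; exact Measure.map_id

namespace IsCoupling

variable {γ : Measure (E × F)} {μ : Measure E} {ν : Measure F}

lemma isProbabilityMeasure [IsProbabilityMeasure μ] (h : IsCoupling γ μ ν) :
    IsProbabilityMeasure γ := by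
  have : IsProbabilityMeasure (γ.map Prod.fst) := h.fst_eq ▸ inferInstance
  exact Measure.isProbabilityMeasure_of_map Prod.fst

lemma integrable_comp_fst (h : IsCoupling γ μ ν) {f : E → ℝ} (hf : Integrable f μ) :
    Integrable (fun p => f p.1) γ :=
  (h.fst_eq ▸ hf).comp_measurable measurable_fst

lemma integrable_comp_snd (h : IsCoupling γ μ ν) {f : F → ℝ} (hf : Integrable f ν) :
    Integrable (fun p => f p.2) γ :=
  (h.snd_eq ▸ hf).comp_measurable measurable_snd

lemma integral_comp_fst (h : IsCoupling γ μ ν) {f : E → ℝ} (hf : AEStronglyMeasurable f μ) :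
    ∫ p, f p.1 ∂γ = ∫ x, f x ∂μ := by
  rw [← h.fst_eq, integral_map measurable_fst.aemeasurable (h.fst_eq ▸ hf)]

lemma integral_comp_snd (h : IsCoupling γ μ ν) {f : F → ℝ} (hf : AEStronglyMeasurable f ν) :
    ∫ p, f p.2 ∂γ = ∫ x, f x ∂ν := by
  rw [← h.snd_eq, integral_map measurable_snd.aemeasurable (h.snd_eq ▸ hf)]

lemma integral_add_comp (h : IsCoupling γ μ ν) {f : E → ℝ} {g : F → ℝ} (hf : Integrable f μ)
    (hg : Integrable g ν) : ∫ p, f p.1 + g p.2 ∂γ = ∫ x, f x ∂μ + ∫ y, g y ∂ν := by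
  rw [integral_add (h.integrable_comp_fst hf) (h.integrable_comp_snd hg),
    h.integral_comp_fst hf.aestronglyMeasurable, h.integral_comp_snd hg.aestronglyMeasurable]

end IsCoupling

/-- Sub-couplings of two measures: measures on the product whose marginals are dominated by the
given ones. They describe the part of the mass whose transport has already been prescribed. -/
structure IsSubcoupling (γ : Measure (E × F)) (μ : Measure E) (ν : Measure F) : Prop where
  fst_le : γ.map Prod.fst ≤ μ
  snd_le : γ.map Prod.snd ≤ ν

/-- The multiple of `μ ⊗ ν` of total mass `min (μ univ) (ν univ)`. If `μ` and `ν` both vanish, the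
factor is `∞` and the measure is still `∞ • 0 = 0`. -/
noncomputable def productSubcoupling (μ : Measure E) (ν : Measure F) : Measure (E × F) :=
  (max (μ univ) (ν univ))⁻¹ • μ.prod ν

lemma smul_measure_le_self {a : ℝ≥0∞} (ha : a ≤ 1) (μ : Measure E) : a • μ ≤ μ :=
  fun _ => mul_le_of_le_one_left' ha

lemma productSubcoupling_univ (μ : Measure E) (ν : Measure F) [IsFiniteMeasure μ]
    [IsFiniteMeasure ν] : productSubcoupling μ ν univ = min (μ univ) (ν univ) := by
  rcases eq_or_ne (max (μ univ) (ν univ)) 0 with h0 | h0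
  · simp_all [productSubcoupling]
  · rw [productSubcoupling, Measure.smul_apply, ← univ_prod_univ, Measure.prod_prod, smul_eq_mul,
      ← max_mul_min (μ univ), ENNReal.inv_mul_cancel_left h0 (by simp)]

lemma isSubcoupling_productSubcoupling (μ : Measure E) (ν : Measure F) [SFinite ν] :
    IsSubcoupling (productSubcoupling μ ν) μ ν where
  fst_le := by
    rw [productSubcoupling, Measure.map_smul, Measure.map_fst_prod, smul_smul,
      ← ENNReal.div_eq_inv_mul]
    exact smul_measure_le_self (ENNReal.div_le_of_le_mul (by simp)) μ
  snd_le := by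
    rw [productSubcoupling, Measure.map_smul, Measure.map_snd_prod, smul_smul,
      ← ENNReal.div_eq_inv_mul]
    exact smul_measure_le_self (ENNReal.div_le_of_le_mul (by simp)) ν

namespace IsSubcoupling

variable {γ : Measure (E × F)} {μ : Measure E} {ν : Measure F}

lemma isCoupling [IsFiniteMeasure μ] [IsFiniteMeasure ν] (h : IsSubcoupling γ μ ν)
    (hμ : γ univ = μ univ) (hν : γ univ = ν univ) : IsCoupling γ μ ν where
  fst_eq := by
    have := isFiniteMeasure_of_le μ h.fst_le
    refine Measure.eq_of_le_of_measure_univ_eq h.fst_le ?_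
    rwa [Measure.map_apply measurable_fst .univ]
  snd_eq := by
    have := isFiniteMeasure_of_le ν h.snd_le
    refine Measure.eq_of_le_of_measure_univ_eq h.snd_le ?_
    rwa [Measure.map_apply measurable_snd .univ]

lemma sum {ι : Type*} {γ : ι → Measure (E × F)} {μ : ι → Measure E} {ν : ι → Measure F}
    (h : ∀ j, IsSubcoupling (γ j) (μ j) (ν j)) :
    IsSubcoupling (Measure.sum γ) (Measure.sum μ) (Measure.sum ν) where
  fst_le := by
    rw [Measure.map_sum measurable_fst.aemeasurable]
    exact Measure.le_iff.2 fun s hs => by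
      simpa only [Measure.sum_apply _ hs] using ENNReal.tsum_le_tsum fun j => (h j).fst_le s
  snd_le := by
    rw [Measure.map_sum measurable_snd.aemeasurable]
    exact Measure.le_iff.2 fun s hs => by
      simpa only [Measure.sum_apply _ hs] using ENNReal.tsum_le_tsum fun j => (h j).snd_le s

lemma exists_isCoupling_ge [IsFiniteMeasure μ] [IsFiniteMeasure ν] (h : IsSubcoupling γ μ ν)
    (hmass : μ univ = ν univ) : ∃ γ', IsCoupling γ' μ ν ∧ γ ≤ γ' := by
  have := isFiniteMeasure_of_le μ h.fst_le
  have := isFiniteMeasure_of_le ν h.snd_le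
  set μ' := μ - γ.map Prod.fst
  set ν' := ν - γ.map Prod.snd
  have residual_mass : μ' univ = ν' univ := by
    rw [Measure.sub_apply .univ h.fst_le, Measure.sub_apply .univ h.snd_le,
      Measure.map_apply measurable_fst .univ, Measure.map_apply measurable_snd .univ, hmass,
      preimage_univ, preimage_univ]
  have residual : IsCoupling (productSubcoupling μ' ν') μ' ν' :=
    (isSubcoupling_productSubcoupling μ' ν').isCoupling
      (by rw [productSubcoupling_univ, residual_mass, min_self])
      (by rw [productSubcoupling_univ, residual_mass, min_self])
  refine ⟨γ + productSubcoupling μ' ν', ⟨?_, ?_⟩, Measure.le_add_right le_rfl⟩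
  · rw [Measure.map_add _ _ measurable_fst, residual.fst_eq, add_comm,
      Measure.sub_add_cancel_of_le h.fst_le]
  · rw [Measure.map_add _ _ measurable_snd, residual.snd_eq, add_comm,
      Measure.sub_add_cancel_of_le h.snd_le]

end IsSubcoupling

lemma sum_withDensity_of_tsum_eq_one {ι : Type*} [Countable ι] (μ : Measure E) {f : ι → E → ℝ≥0∞}
    (hf : ∀ j, Measurable (f j)) (hsum : ∀ x, ∑' j, f j x = 1) :
    Measure.sum (fun j => μ.withDensity (f j)) = μ := by
  have tsum_eq_one : ∑' j, f j = 1 := funext fun x => by rw [ENNReal.tsum_apply, hsum, Pi.one_apply]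
  rw [← withDensity_tsum hf, tsum_eq_one, withDensity_one]

lemma productSubcoupling_withDensity_apply (μ ν : Measure E) {f : E → ℝ≥0∞} (hf : Measurable f)
    [IsFiniteMeasure (μ.withDensity f)] [IsFiniteMeasure (ν.withDensity f)] {s : Set (E × E)}
    (hs : ∀ x y, f x ≠ 0 → f y ≠ 0 → (x, y) ∈ s) :
    productSubcoupling (μ.withDensity f) (ν.withDensity f) s =
      min (∫⁻ x, f x ∂μ) (∫⁻ x, f x ∂ν) := by
  have density_ne_zero (κ : Measure E) : ∀ᵐ x ∂κ.withDensity f, f x ≠ 0 :=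
    (ae_withDensity_iff hf).2 (ae_of_all _ fun _ => id)
  have mem_s : s =ᵐ[productSubcoupling (μ.withDensity f) (ν.withDensity f)] univ := by
    refine eventuallyEq_univ.2 (Measure.ae_smul_measure ?_ _)
    filter_upwards [Measure.quasiMeasurePreserving_fst.ae (density_ne_zero μ),
      Measure.quasiMeasurePreserving_snd.ae (density_ne_zero ν)] with p hx hy
    exact hs p.1 p.2 hx hy
  rw [measure_congr mem_s, productSubcoupling_univ]
  simp only [withDensity_apply _ MeasurableSet.univ, Measure.restrict_univ]

-- For each `j` the density `f j` carries a piece of `μ` and a piece of `ν`. Their common mass is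
-- transported within `s`, and what is left of both measures is coupled arbitrarily.
lemma exists_isCoupling_tsum_min_le {ι : Type*} [Countable ι] (μ ν : Measure E)
    [IsFiniteMeasure μ] [IsFiniteMeasure ν] (hmass : μ univ = ν univ) {f : ι → E → ℝ≥0∞}
    (hf : ∀ j, Measurable (f j)) (hsum : ∀ x, ∑' j, f j x = 1) {s : Set (E × E)}
    (hs : MeasurableSet s) (hfs : ∀ j x y, f j x ≠ 0 → f j y ≠ 0 → (x, y) ∈ s) :
    ∃ γ, IsCoupling γ μ ν ∧ ∑' j, min (∫⁻ x, f j x ∂μ) (∫⁻ x, f j x ∂ν) ≤ γ s := by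
  have hμ := sum_withDensity_of_tsum_eq_one μ hf hsum
  have hν := sum_withDensity_of_tsum_eq_one ν hf hsum
  have finμ j : IsFiniteMeasure (μ.withDensity (f j)) :=
    isFiniteMeasure_of_le μ ((Measure.le_sum _ j).trans_eq hμ)
  have finν j : IsFiniteMeasure (ν.withDensity (f j)) :=
    isFiniteMeasure_of_le ν ((Measure.le_sum _ j).trans_eq hν)
  have subcoupling := IsSubcoupling.sum fun j =>
    isSubcoupling_productSubcoupling (μ.withDensity (f j)) (ν.withDensity (f j))
  rw [hμ, hν] at subcoupling
  obtain ⟨γ, hγ, hle⟩ := subcoupling.exists_isCoupling_ge hmass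
  refine ⟨γ, hγ, ?_⟩
  simpa only [Measure.sum_apply _ hs, productSubcoupling_withDensity_apply μ ν (hf _) (hfs _)]
    using hle s

end Coupling

lemma exists_tendsto_of_tendsto_infDist {X : Type*} [PseudoMetricSpace X] {x : X}
    {S : ℕ → Set X} (hS : ∀ n, (S n).Nonempty)
    (h : Tendsto (fun n => Metric.infDist x (S n)) atTop (𝓝 0)) :
    ∃ u : ℕ → X, (∀ n, u n ∈ S n) ∧ Tendsto u atTop (𝓝 x) := by
  have near_minimizer n : ∃ y ∈ S n, dist x y < Metric.infDist x (S n) + 1 / (n + 1 : ℝ) :=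
    (Metric.infDist_lt_iff (hS n)).1 (lt_add_of_pos_right _ Nat.one_div_pos_of_nat)
  choose u u_mem hu using near_minimizer
  refine ⟨u, u_mem, tendsto_iff_dist_tendsto_zero.2 ?_⟩
  refine squeeze_zero (fun _ => dist_nonneg) (fun n => ((dist_comm _ _).trans_lt (hu n)).le) ?_
  simpa only [add_zero] using h.add tendsto_one_div_add_atTop_nhds_zero_nat

lemma exists_partition_dist_lt {E : Type*} [PseudoMetricSpace E] [SecondCountableTopology E]
    [Nonempty E] {η : ℝ} (hη : 0 < η) :
    ∃ f : ℕ → BoundedContinuousFunction E ℝ≥0, (∀ x, ∑' j, (f j x : ℝ≥0∞) = 1) ∧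
      ∀ j x y, f j x ≠ 0 → f j y ≠ 0 → dist x y < η := by
  let U (j : ℕ) := Metric.ball (TopologicalSpace.denseSeq E j) (η / 2)
  have U_covers : univ ⊆ ⋃ j, U j := fun x _ => by
    obtain ⟨j, hj⟩ := (TopologicalSpace.denseRange_denseSeq E).exists_dist_lt x (half_pos hη)
    exact mem_iUnion.2 ⟨j, hj⟩
  obtain ⟨ρ, hρ⟩ := PartitionOfUnity.exists_isSubordinate isClosed_univ U
    (fun _ => Metric.isOpen_ball) U_covers
  have ρ_bound j x : ‖ρ j x‖ ≤ 1 := by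
    rw [Real.norm_of_nonneg (ρ.nonneg j x)]
    exact ρ.le_one j x
  refine ⟨fun j => (BoundedContinuousFunction.ofNormedAddCommGroup (ρ j) (ρ j).continuous 1
    (ρ_bound j)).nnrealPart, fun x => ?_, fun j x y hx hy => ?_⟩
  · calc ∑' j, ENNReal.ofReal (ρ j x) = ∑ j ∈ ρ.finsupport x, ENNReal.ofReal (ρ j x) :=
          tsum_eq_sum fun j hj => by
            rw [Function.notMem_support.1 (mt (ρ.mem_finsupport x).2 hj), ENNReal.ofReal_zero]
      _ = 1 := by
          rw [← ENNReal.ofReal_sum_of_nonneg fun j _ => ρ.nonneg j x,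
            ρ.sum_finsupport (mem_univ x), ENNReal.ofReal_one]
  · have mem_U z (hz : (ρ j z).toNNReal ≠ 0) : z ∈ U j :=
      hρ j (subset_tsupport _ fun h => hz (by rw [h, Real.toNNReal_zero]))
    calc dist x y
        ≤ dist x (TopologicalSpace.denseSeq E j) + dist y (TopologicalSpace.denseSeq E j) :=
          dist_triangle_right _ _ _
      _ < η / 2 + η / 2 := add_lt_add (mem_U x hx) (mem_U y hy)
      _ = η := add_halves η

section Diagonal

variable {E : Type*} [PseudoMetricSpace E] [MeasurableSpace E]

section

variable [OpensMeasurableSpace E]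

lemma levyProkhorovDist_map_le {Ω : Type*} [MeasurableSpace Ω] (μ : Measure Ω)
    [IsProbabilityMeasure μ] {f g : Ω → E} (hf : AEMeasurable f μ)
    (hg : AEMeasurable g μ) {η : ℝ} (hη : 0 ≤ η)
    (h : μ {ω | η ≤ dist (f ω) (g ω)} ≤ ENNReal.ofReal η) :
    levyProkhorovDist (μ.map f) (μ.map g) ≤ η := by
  have := Measure.isProbabilityMeasure_map hf
  have := Measure.isProbabilityMeasure_map hg
  refine levyProkhorovDist_le_of_forall_le _ _ hη fun ε B hε hB => ?_
  rw [Measure.map_apply_of_aemeasurable hf hB,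
    Measure.map_apply_of_aemeasurable hg Metric.isOpen_thickening.measurableSet]
  have preimage_subset :
      f ⁻¹' B ⊆ g ⁻¹' Metric.thickening ε B ∪ {ω | η ≤ dist (f ω) (g ω)} := fun ω hω => by
    rcases lt_or_ge (dist (f ω) (g ω)) η with hlt | hge
    · exact .inl (Metric.mem_thickening_iff.2 ⟨f ω, hω, by rw [dist_comm]; exact hlt.trans hε⟩)
    · exact .inr hge
  calc μ (f ⁻¹' B) ≤ μ (g ⁻¹' Metric.thickening ε B) + μ {ω | η ≤ dist (f ω) (g ω)} :=
        (measure_mono preimage_subset).trans (measure_union_le _ _)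
    _ ≤ μ (g ⁻¹' Metric.thickening ε B) + ENNReal.ofReal ε := by
        gcongr
        exact h.trans (ENNReal.ofReal_le_ofReal hε.le)

lemma eventually_lt_tsum_min_lintegral {α : Type*} {l : Filter α}
    {P : α → ProbabilityMeasure E} {Q : ProbabilityMeasure E} (hPQ : Tendsto P l (𝓝 Q))
    {f : ℕ → BoundedContinuousFunction E ℝ≥0} (hf : ∀ x, ∑' j, (f j x : ℝ≥0∞) = 1)
    {δ : ℝ≥0∞} (hδ : δ < 1) :
    ∀ᶠ a in l, δ < ∑' j, min (∫⁻ x, f j x ∂(P a : Measure E)) (∫⁻ x, f j x ∂(Q : Measure E)) := by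
  have lt_sum : δ < ∑' j, ∫⁻ x, f j x ∂(Q : Measure E) := by
    rw [← lintegral_tsum fun j => by fun_prop]
    simpa only [hf, lintegral_one, measure_univ] using hδ
  obtain ⟨s, hs⟩ := ((ENNReal.summable.hasSum).eventually (lt_mem_nhds lt_sum)).exists
  have tendsto_min : Tendsto
      (fun a => ∑ j ∈ s, min (∫⁻ x, f j x ∂(P a : Measure E)) (∫⁻ x, f j x ∂(Q : Measure E))) l
      (𝓝 (∑ j ∈ s, ∫⁻ x, f j x ∂(Q : Measure E))) :=
    tendsto_finsetSum s fun j _ => by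
      simpa only [min_self] using
        (ProbabilityMeasure.tendsto_iff_forall_lintegral_tendsto.1 hPQ (f j)).min
          (tendsto_const_nhds (x := ∫⁻ x, f j x ∂(Q : Measure E)))
  filter_upwards [tendsto_min.eventually (lt_mem_nhds hs)] with a ha
  exact ha.trans_le (ENNReal.sum_le_tsum s)

end

variable [SecondCountableTopology E] [BorelSpace E]

lemma eventually_exists_isCoupling_dist_ge_le {α : Type*} {l : Filter α}
    {P : α → ProbabilityMeasure E} {Q : ProbabilityMeasure E} (hPQ : Tendsto P l (𝓝 Q))
    {η : ℝ} (hη : 0 < η) {δ : ℝ≥0∞} (hδ : 0 < δ) :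
    ∀ᶠ a in l, ∃ γ : Measure (E × E), IsCoupling γ (P a) Q ∧ γ {p | η ≤ dist p.1 p.2} ≤ δ := by
  have := Q.nonempty
  obtain ⟨f, hf, hfη⟩ := exists_partition_dist_lt (E := E) hη
  filter_upwards [eventually_lt_tsum_min_lintegral hPQ hf
    (ENNReal.sub_lt_self ENNReal.one_ne_top one_ne_zero hδ.ne')] with a ha
  have near_measurable : MeasurableSet {p : E × E | dist p.1 p.2 < η} :=
    measurableSet_lt (by fun_prop) (by fun_prop)
  obtain ⟨γ, hγ, hle⟩ := exists_isCoupling_tsum_min_le (P a : Measure E) Q (by simp)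
    (fun j => by fun_prop) hf near_measurable fun j x y hx hy =>
      hfη j x y (mod_cast hx) (mod_cast hy)
  have := hγ.isProbabilityMeasure
  refine ⟨γ, hγ, ?_⟩
  calc γ {p | η ≤ dist p.1 p.2} = γ {p | dist p.1 p.2 < η}ᶜ := by
        simp only [compl_ofPred, not_lt]
    _ = 1 - γ {p | dist p.1 p.2 < η} := prob_compl_eq_one_sub near_measurable
    _ ≤ δ := tsub_le_iff_tsub_le.1 (ha.le.trans hle)

lemma IsCoupling.levyProkhorovDist_map_diag_le {γ : Measure (E × E)} [IsProbabilityMeasure γ]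
    {μ ν : Measure E} (hγ : IsCoupling γ μ ν) {η : ℝ} (hη : 0 ≤ η)
    (h : γ {p | η ≤ dist p.1 p.2} ≤ ENNReal.ofReal η) :
    levyProkhorovDist (ν.map fun x => (x, x)) γ ≤ η := by
  have map_diag : ν.map (fun x => (x, x)) = γ.map fun p => (p.2, p.2) := by
    rw [← hγ.snd_eq, Measure.map_map (by fun_prop) measurable_snd]
    rfl
  have dist_diag (p : E × E) : dist (p.2, p.2) p = dist p.1 p.2 := by
    simp [Prod.dist_eq, dist_comm p.2]
  calc levyProkhorovDist (ν.map fun x => (x, x)) γ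
      = levyProkhorovDist (γ.map fun p => (p.2, p.2)) (γ.map id) := by
        rw [map_diag, Measure.map_id]
    _ ≤ η := levyProkhorovDist_map_le γ (by fun_prop) (by fun_prop) hη (by
        simpa only [id, dist_diag] using h)

theorem exists_isCoupling_tendsto_map_diag {P : ℕ → ProbabilityMeasure E}
    {Q : ProbabilityMeasure E} (hPQ : Tendsto P atTop (𝓝 Q)) :
    ∃ γ : ℕ → ProbabilityMeasure (E × E), (∀ n, IsCoupling (γ n : Measure (E × E)) (P n) Q) ∧
      Tendsto γ atTop (𝓝 (Q.map (f := fun x => (x, x)) (by fun_prop))) := by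
  let D : ProbabilityMeasure (E × E) := Q.map (f := fun x => (x, x)) (by fun_prop)
  let S (n : ℕ) : Set (LevyProkhorov (ProbabilityMeasure (E × E))) :=
    {γ | IsCoupling (γ.toMeasure : Measure (E × E)) (P n) Q}
  have S_nonempty n : (S n).Nonempty :=
    ⟨.ofMeasure ⟨(P n : Measure E).prod Q, inferInstance⟩, isCoupling_prod _ _⟩
  have tendsto_infDist :
      Tendsto (fun n => Metric.infDist (LevyProkhorov.ofMeasure D) (S n)) atTop (𝓝 0) := by
    refine Metric.tendsto_nhds.2 fun ε hε => ?_
    filter_upwards [eventually_exists_isCoupling_dist_ge_le hPQ (half_pos hε)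
      (ENNReal.ofReal_pos.2 (half_pos hε))] with n ⟨γ, hγ, hle⟩
    have hγ_prob := hγ.isProbabilityMeasure
    rw [Real.dist_0_eq_abs, abs_of_nonneg Metric.infDist_nonneg]
    calc Metric.infDist (LevyProkhorov.ofMeasure D) (S n)
        ≤ dist (LevyProkhorov.ofMeasure D) (.ofMeasure ⟨γ, hγ_prob⟩) :=
          Metric.infDist_le_dist_of_mem hγ
      _ ≤ ε / 2 := hγ.levyProkhorovDist_map_diag_le (half_pos hε).le hle
      _ < ε := half_lt_self hε
  obtain ⟨γ, hγ, hγD⟩ := exists_tendsto_of_tendsto_infDist S_nonempty tendsto_infDist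
  exact ⟨fun n => (γ n).toMeasure, hγ,
    (LevyProkhorov.continuous_toMeasure_probabilityMeasure.tendsto _).comp hγD⟩

end Diagonal

section WeakConvergence

variable {E : Type*} [TopologicalSpace E] [HasOuterApproxClosed E] [MeasurableSpace E]
  [OpensMeasurableSpace E] {P : ℕ → ProbabilityMeasure E} {Q : ProbabilityMeasure E}

lemma eventually_lt_integral_of_tendsto (hPQ : Tendsto P atTop (𝓝 Q)) {f : E → ℝ}
    (hf : Continuous f) (f_nonneg : 0 ≤ f) (hPf : ∀ n, Integrable f (P n : Measure E))
    (hQf : Integrable f (Q : Measure E)) {a : ℝ} (ha : a < ∫ x, f x ∂(Q : Measure E)) :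
    ∀ᶠ n in atTop, a < ∫ x, f x ∂(P n : Measure E) := by
  rcases lt_or_ge a 0 with ha0 | ha0
  · exact .of_forall fun n => ha0.trans_le (integral_nonneg f_nonneg)
  have lintegral_le_liminf : ∫⁻ x, ENNReal.ofReal (f x) ∂(Q : Measure E) ≤
      atTop.liminf fun n => ∫⁻ x, ENNReal.ofReal (f x) ∂(P n : Measure E) :=
    lintegral_le_liminf_lintegral_of_forall_isOpen_measure_le_liminf_measure hf f_nonneg
      fun G hG => ProbabilityMeasure.le_liminf_measure_open_of_tendsto hPQ hG
  have lt_lintegral : ENNReal.ofReal a < ∫⁻ x, ENNReal.ofReal (f x) ∂(Q : Measure E) := by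
    rw [← ofReal_integral_eq_lintegral_ofReal hQf (ae_of_all _ f_nonneg)]
    exact (ENNReal.ofReal_lt_ofReal_iff_of_nonneg ha0).2 ha
  filter_upwards [eventually_lt_of_lt_liminf (lt_lintegral.trans_le lintegral_le_liminf)] with n hn
  rwa [← ofReal_integral_eq_lintegral_ofReal (hPf n) (ae_of_all _ f_nonneg),
    ENNReal.ofReal_lt_ofReal_iff_of_nonneg ha0] at hn

-- Fatou's lemma for weak convergence, applied to `W + h ≥ 0`.
lemma eventually_lt_integral_of_abs_le (hPQ : Tendsto P atTop (𝓝 Q)) {h W : E → ℝ}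
    (hh : Continuous h) (hW : Continuous W) (hhW : ∀ x, |h x| ≤ W x)
    (hPW : ∀ n, Integrable W (P n : Measure E)) (hQW : Integrable W (Q : Measure E))
    (tendsto_W : Tendsto (fun n => ∫ x, W x ∂(P n : Measure E)) atTop
      (𝓝 (∫ x, W x ∂(Q : Measure E)))) {a : ℝ} (ha : a < ∫ x, h x ∂(Q : Measure E)) :
    ∀ᶠ n in atTop, a < ∫ x, h x ∂(P n : Measure E) := by
  have h_integrable {μ : Measure E} (hμ : Integrable W μ) : Integrable h μ :=
    hμ.mono' hh.aestronglyMeasurable (ae_of_all _ hhW)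
  have integral_add_W {μ : Measure E} (hμ : Integrable W μ) :
      ∫ x, (W + h) x ∂μ = ∫ x, W x ∂μ + ∫ x, h x ∂μ := integral_add hμ (h_integrable hμ)
  obtain ⟨b, hab, hb⟩ := exists_between ha
  have lt_add := eventually_lt_integral_of_tendsto hPQ (hW.add hh)
    (fun x => neg_le_iff_add_nonneg'.1 (neg_le_of_abs_le (hhW x)))
    (fun n => (hPW n).add (h_integrable (hPW n))) (hQW.add (h_integrable hQW))
    (a := ∫ x, W x ∂(Q : Measure E) + b) (by rw [integral_add_W hQW]; gcongr)
  have lt_W := tendsto_W.eventually (gt_mem_nhds (lt_add_of_pos_right _ (sub_pos.2 hab)))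
  filter_upwards [lt_add, lt_W] with n h1 h2
  rw [integral_add_W (hPW n)] at h1
  linarith

theorem tendsto_integral_of_abs_le (hPQ : Tendsto P atTop (𝓝 Q)) {h W : E → ℝ}
    (hh : Continuous h) (hW : Continuous W) (hhW : ∀ x, |h x| ≤ W x)
    (hPW : ∀ n, Integrable W (P n : Measure E)) (hQW : Integrable W (Q : Measure E))
    (tendsto_W : Tendsto (fun n => ∫ x, W x ∂(P n : Measure E)) atTop
      (𝓝 (∫ x, W x ∂(Q : Measure E)))) :
    Tendsto (fun n => ∫ x, h x ∂(P n : Measure E)) atTop (𝓝 (∫ x, h x ∂(Q : Measure E))) := by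
  refine tendsto_order.2 ⟨fun a ha => eventually_lt_integral_of_abs_le hPQ hh hW hhW hPW hQW
    tendsto_W ha, fun a ha => ?_⟩
  have eventually_neg := eventually_lt_integral_of_abs_le hPQ hh.neg hW
    (fun x => (abs_neg (h x)).trans_le (hhW x)) hPW hQW tendsto_W (a := -a)
    (by simpa only [Pi.neg_apply, integral_neg, neg_lt_neg_iff] using ha)
  simpa only [Pi.neg_apply, integral_neg, neg_lt_neg_iff] using eventually_neg

end WeakConvergence

section TransportCost

variable {E : Type*} [MeasurableSpace E] {c : E × E → ℝ} {μ ν : Measure E}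

/-- Kantorovich transport cost between `μ` and `ν` for the cost function `c`. The Wasserstein
distances `W1R` and `W1Path` are the cases `c (x, y) = |x - y|` and `c (x, y) = ‖x - y‖₁`. Like
these, it has the junk value `0` if no coupling integrates `c`. -/
noncomputable def transportCost (c : E × E → ℝ) (μ ν : Measure E) : ℝ :=
  sInf {r | ∃ γ : Measure (E × E), IsProbabilityMeasure γ ∧ γ.map Prod.fst = μ ∧
    γ.map Prod.snd = ν ∧ Integrable c γ ∧ r = ∫ p, c p ∂γ}

lemma transportCost_nonneg (hc : 0 ≤ c) : 0 ≤ transportCost c μ ν := by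
  refine Real.sInf_nonneg ?_
  rintro _ ⟨γ, -, -, -, -, rfl⟩
  exact integral_nonneg hc

lemma transportCost_le_integral (hc : 0 ≤ c) {γ : Measure (E × E)} [IsProbabilityMeasure γ]
    (hγ : IsCoupling γ μ ν) (hcγ : Integrable c γ) : transportCost c μ ν ≤ ∫ p, c p ∂γ := by
  refine csInf_le ⟨0, ?_⟩ ⟨γ, inferInstance, hγ.fst_eq, hγ.snd_eq, hcγ, rfl⟩
  rintro _ ⟨γ', -, -, -, -, rfl⟩
  exact integral_nonneg hc

lemma abs_integral_sub_integral_le_transportCost [IsProbabilityMeasure μ] [IsProbabilityMeasure ν]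
    (hc : Integrable c (μ.prod ν)) {f : E → ℝ} (hfμ : Integrable f μ) (hfν : Integrable f ν) {L : ℝ}
    (hL : 0 ≤ L) (hf : ∀ x y, |f x - f y| ≤ L * c (x, y)) :
    |∫ x, f x ∂μ - ∫ x, f x ∂ν| ≤ L * transportCost c μ ν := by
  rw [transportCost, ← smul_eq_mul, ← Real.sInf_smul_of_nonneg hL]
  refine le_csInf (Nonempty.smul_set
    ⟨_, μ.prod ν, inferInstance, (isCoupling_prod μ ν).fst_eq, (isCoupling_prod μ ν).snd_eq, hc,
      rfl⟩) ?_
  rintro _ ⟨_, ⟨γ, -, hγμ, hγν, hcγ, rfl⟩, rfl⟩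
  have hγ : IsCoupling γ μ ν := ⟨hγμ, hγν⟩
  have hfγ := (hγ.integrable_comp_fst hfμ).sub (hγ.integrable_comp_snd hfν)
  calc |∫ x, f x ∂μ - ∫ x, f x ∂ν| = |∫ p, (f p.1 - f p.2) ∂γ| := by
        rw [integral_sub (hγ.integrable_comp_fst hfμ) (hγ.integrable_comp_snd hfν),
          hγ.integral_comp_fst hfμ.aestronglyMeasurable,
          hγ.integral_comp_snd hfν.aestronglyMeasurable]
    _ ≤ ∫ p, |f p.1 - f p.2| ∂γ := abs_integral_le_integral_abs
    _ ≤ ∫ p, L * c p ∂γ := integral_mono hfγ.abs (hcγ.const_mul L) fun p => hf p.1 p.2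
    _ = L • ∫ p, c p ∂γ := integral_const_mul _ _

theorem tendsto_transportCost_zero [PseudoMetricSpace E] [SecondCountableTopology E] [BorelSpace E]
    {N : E → ℝ} {P : ℕ → ProbabilityMeasure E} {Q : ProbabilityMeasure E}
    (hPQ : Tendsto P atTop (𝓝 Q)) (hc : Continuous c) (c_nonneg : 0 ≤ c)
    (c_diag : ∀ x, c (x, x) = 0) (hN : Continuous N) (hcN : ∀ p, c p ≤ N p.1 + N p.2)
    (hPN : ∀ n, Integrable N (P n : Measure E)) (hQN : Integrable N (Q : Measure E))
    (tendsto_N : Tendsto (fun n => ∫ x, N x ∂(P n : Measure E)) atTop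
      (𝓝 (∫ x, N x ∂(Q : Measure E)))) :
    Tendsto (fun n => transportCost c (P n) Q) atTop (𝓝 0) := by
  obtain ⟨γ, hγ, tendsto_γ⟩ := exists_isCoupling_tendsto_map_diag hPQ
  set D := Q.map (f := fun x => (x, x)) (by fun_prop)
  have hD : IsCoupling (D : Measure (E × E)) Q Q := isCoupling_map_diag (Q : Measure E)
  have c_le p : |c p| ≤ N p.1 + N p.2 := (abs_of_nonneg (c_nonneg p)).trans_le (hcN p)
  have integrable_N n : Integrable (fun p => N p.1 + N p.2) (γ n : Measure (E × E)) :=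
    ((hγ n).integrable_comp_fst (hPN n)).add ((hγ n).integrable_comp_snd hQN)
  have tendsto_integral_N : Tendsto (fun n => ∫ p, N p.1 + N p.2 ∂(γ n : Measure (E × E))) atTop
      (𝓝 (∫ p, N p.1 + N p.2 ∂(D : Measure (E × E)))) := by
    simpa only [(hγ _).integral_add_comp (hPN _) hQN, hD.integral_add_comp hQN hQN]
      using tendsto_N.add_const _
  have tendsto_integral_c := tendsto_integral_of_abs_le tendsto_γ hc (by fun_prop) c_le
    integrable_N ((hD.integrable_comp_fst hQN).add (hD.integrable_comp_snd hQN)) tendsto_integral_N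
  have integral_diag : ∫ p, c p ∂(D : Measure (E × E)) = 0 := by
    rw [ProbabilityMeasure.toMeasure_map,
      integral_map (by fun_prop) hc.measurable.aestronglyMeasurable]
    simp only [c_diag, integral_zero]
  rw [integral_diag] at tendsto_integral_c
  exact squeeze_zero (fun n => transportCost_nonneg c_nonneg)
    (fun n => transportCost_le_integral c_nonneg (hγ n)
      ((integrable_N n).mono' hc.measurable.aestronglyMeasurable (ae_of_all _ c_le)))
    tendsto_integral_c

end TransportCost

lemma integrable_comp_lipschitzWith {μ : Measure ℝ} [IsFiniteMeasure μ]
    (hμ : Integrable (fun y => y) μ) {f : ℝ → ℝ} {K : ℝ≥0} (hf : LipschitzWith K f) :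
    Integrable f μ := by
  refine ((hμ.abs.const_mul (K : ℝ)).add (integrable_const |f 0|)).mono'
    hf.continuous.aestronglyMeasurable (ae_of_all _ fun y => ?_)
  have := hf.dist_le_mul y 0
  simp only [Real.dist_eq, sub_zero] at this
  exact sub_le_iff_le_add.1 ((abs_sub_abs_le_abs_sub _ _).trans this)

lemma tendsto_integral_of_tendsto_W1R {ι : Type*} {l : Filter ι} {μs : ι → Measure ℝ}
    [∀ a, IsProbabilityMeasure (μs a)] {μ : Measure ℝ} [IsProbabilityMeasure μ]
    (hμs : ∀ a, Integrable (fun y => y) (μs a)) (hμ : Integrable (fun y => y) μ)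
    (h : Tendsto (fun a => W1R (μs a) μ) l (𝓝 0)) {f : ℝ → ℝ} {K : ℝ≥0} (hf : LipschitzWith K f) :
    Tendsto (fun a => ∫ y, f y ∂μs a) l (𝓝 (∫ y, f y ∂μ)) := by
  refine tendsto_iff_norm_sub_tendsto_zero.2 (squeeze_zero (g := fun a => K * W1R (μs a) μ)
    (fun _ => norm_nonneg _) (fun a => ?_) (by simpa only [mul_zero] using h.const_mul (K : ℝ)))
  exact abs_integral_sub_integral_le_transportCost (((hμs a).comp_fst μ).sub (hμ.comp_snd _)).abs
    (integrable_comp_lipschitzWith (hμs a) hf) (integrable_comp_lipschitzWith hμ hf) K.2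
    hf.dist_le_mul

lemma tendsto_of_tendsto_W1R {ι : Type*} {l : Filter ι} [l.IsCountablyGenerated]
    {μs : ι → ProbabilityMeasure ℝ} {μ : ProbabilityMeasure ℝ}
    (hμs : ∀ a, Integrable (fun y => y) (μs a : Measure ℝ))
    (hμ : Integrable (fun y => y) (μ : Measure ℝ))
    (h : Tendsto (fun a => W1R (μs a) μ) l (𝓝 0)) : Tendsto μs l (𝓝 μ) := by
  refine tendsto_iff_forall_lipschitz_integral_tendsto.2 ?_
  rintro f - ⟨K, hf⟩
  exact tendsto_integral_of_tendsto_W1R hμs hμ h hf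

lemma exists_isCompact_measure_compl_le_of_integral_le {ι E : Type*} [TopologicalSpace E]
    [MeasurableSpace E] {μs : ι → Measure E} [∀ a, IsFiniteMeasure (μs a)] {N : E → ℝ}
    (N_nonneg : 0 ≤ N) (isCompact_le : ∀ R, IsCompact {x | N x ≤ R})
    (hN : ∀ a, Integrable N (μs a)) {C : ℝ} (hC : ∀ a, ∫ x, N x ∂μs a ≤ C) {δ : ℝ} (hδ : 0 < δ) :
    ∃ K, IsCompact K ∧ ∀ a, μs a Kᶜ ≤ ENNReal.ofReal δ := by
  refine ⟨_, isCompact_le ((|C| + 1) / δ), fun a => ?_⟩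
  have R_pos : 0 < (|C| + 1) / δ := by positivity
  have markov := mul_meas_ge_le_integral_of_nonneg (ae_of_all _ N_nonneg) (hN a) ((|C| + 1) / δ)
  have measureReal_le : (μs a).real {x | (|C| + 1) / δ ≤ N x} ≤ δ := by
    refine le_of_mul_le_mul_left ?_ R_pos
    rw [div_mul_cancel₀ _ hδ.ne']
    linarith [hC a, le_abs_self C]
  rw [← ofReal_measureReal]
  refine ENNReal.ofReal_le_ofReal ((measureReal_mono ?_).trans measureReal_le)
  intro x (hx : ¬N x ≤ (|C| + 1) / δ)
  exact (not_le.1 hx).le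

section ConditionalExpectation

lemma ae_eq_zero_of_forall_integral_mul_eq_zero {F : Type*} [TopologicalSpace F]
    [HasOuterApproxClosed F] [MeasurableSpace F] [BorelSpace F] {μ : Measure F} {f : F → ℝ}
    (hf : Integrable f μ)
    (h : ∀ g : F → ℝ, Continuous g → (∀ x, |g x| ≤ 1) → ∫ x, g x * f x ∂μ = 0) : f =ᵐ[μ] 0 := by
  refine ae_eq_zero_of_forall_setIntegral_isClosed_eq_zero hf fun C hC => ?_
  set g : ℕ → F → ℝ := fun n x => hC.apprSeq n x
  have g_continuous n : Continuous (g n) := NNReal.continuous_coe.comp (hC.apprSeq n).continuous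
  have g_le n x : |g n x| ≤ 1 := by
    rw [NNReal.abs_eq]
    exact_mod_cast HasOuterApproxClosed.apprSeq_apply_le_one hC n x
  have tendsto_g x : Tendsto (fun n => g n x * f x) atTop (𝓝 (C.indicator f x)) := by
    have := NNReal.tendsto_coe.2 (tendsto_pi_nhds.1 (HasOuterApproxClosed.tendsto_apprSeq hC) x)
    convert this.mul_const (f x) using 2
    by_cases hx : x ∈ C <;> simp [hx]
  have tendsto_integral : Tendsto (fun n => ∫ x, g n x * f x ∂μ) atTop
      (𝓝 (∫ x, C.indicator f x ∂μ)) :=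
    tendsto_integral_of_dominated_convergence (fun x => |f x|)
      (fun n => (g_continuous n).aestronglyMeasurable.mul hf.aestronglyMeasurable) hf.abs
      (fun n => ae_of_all _ fun x => by
        rw [norm_mul]
        exact mul_le_of_le_one_left (norm_nonneg _) (g_le n x))
      (ae_of_all _ tendsto_g)
  simp only [h _ (g_continuous _) (g_le _), integral_indicator hC.measurableSet]
    at tendsto_integral
  exact tendsto_nhds_unique tendsto_integral tendsto_const_nhds

variable {Ω : Type*} {m m₀ : MeasurableSpace Ω} {μ : Measure Ω} [IsFiniteMeasure μ] {f : Ω → ℝ}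

lemma integral_mul_condExp (hm : m ≤ m₀) (hf : Integrable f μ) {g : Ω → ℝ}
    (hg : StronglyMeasurable[m] g) {C : ℝ} (hgC : ∀ ω, |g ω| ≤ C) :
    ∫ ω, g ω * (μ[f | m]) ω ∂μ = ∫ ω, g ω * f ω ∂μ := by
  rw [← integral_condExp hm (f := fun ω => g ω * f ω)]
  exact integral_congr_ae (condExp_stronglyMeasurable_mul_of_bound hm hg hf C
    (ae_of_all _ hgC)).symm

lemma abs_integral_mul_le_integral_abs_condExp (hm : m ≤ m₀) (hf : Integrable f μ) {g : Ω → ℝ}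
    (hg : StronglyMeasurable[m] g) (hg1 : ∀ ω, |g ω| ≤ 1) :
    |∫ ω, g ω * f ω ∂μ| ≤ ∫ ω, |(μ[f | m]) ω| ∂μ := by
  rw [← integral_mul_condExp hm hf hg hg1]
  refine norm_integral_le_of_norm_le (f := fun ω => g ω * (μ[f | m]) ω) integrable_condExp.abs
    (ae_of_all _ fun ω => ?_)
  rw [norm_mul]
  exact mul_le_of_le_one_left (norm_nonneg _) (hg1 ω)

lemma condExp_comap_eq_zero {F : Type*} [TopologicalSpace F] [HasOuterApproxClosed F]
    [MeasurableSpace F] [BorelSpace F] {Y : Ω → F} (hY : Measurable Y) (hf : Integrable f μ)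
    (h : ∀ g : F → ℝ, Continuous g → (∀ y, |g y| ≤ 1) → ∫ ω, g (Y ω) * f ω ∂μ = 0) :
    μ[f | MeasurableSpace.comap Y inferInstance] =ᵐ[μ] 0 := by
  obtain ⟨k, hk, condExp_eq⟩ : ∃ k : F → ℝ, StronglyMeasurable k ∧
      μ[f | MeasurableSpace.comap Y inferInstance] = k ∘ Y :=
    stronglyMeasurable_condExp.exists_eq_measurable_comp
  have k_integrable : Integrable k (μ.map Y) := by
    rw [integrable_map_measure hk.aestronglyMeasurable hY.aemeasurable, ← condExp_eq]
    exact integrable_condExp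
  have k_eq_zero : k =ᵐ[μ.map Y] 0 := by
    refine ae_eq_zero_of_forall_integral_mul_eq_zero k_integrable fun g hg hg1 => ?_
    have integral_eq := integral_mul_condExp hY.comap_le hf
      (hg.measurable.comp (comap_measurable Y)).stronglyMeasurable fun ω => hg1 (Y ω)
    rw [condExp_eq] at integral_eq
    rw [integral_map (f := fun y => g y * k y) hY.aemeasurable
      (hg.aestronglyMeasurable.mul hk.aestronglyMeasurable)]
    exact integral_eq.trans (h g hg hg1)
  rw [condExp_eq]
  exact ae_eq_comp hY.aemeasurable k_eq_zero

-- Conditional expectations are not continuous under weak convergence, but the integral of `D`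
-- against a bounded continuous function of `Y` is.
theorem condExp_comap_eq_zero_of_tendsto {E F : Type*} [TopologicalSpace E]
    [HasOuterApproxClosed E] [MeasurableSpace E] [BorelSpace E] [TopologicalSpace F]
    [HasOuterApproxClosed F] [MeasurableSpace F] [BorelSpace F] {P : ℕ → ProbabilityMeasure E}
    {Q : ProbabilityMeasure E} (hPQ : Tendsto P atTop (𝓝 Q)) {Y : E → F} (hY : Continuous Y)
    {D W : E → ℝ} (hD : Continuous D) (hW : Continuous W) (hDW : ∀ x, |D x| ≤ W x)
    (hPW : ∀ n, Integrable W (P n : Measure E)) (hQW : Integrable W (Q : Measure E))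
    (tendsto_W : Tendsto (fun n => ∫ x, W x ∂(P n : Measure E)) atTop
      (𝓝 (∫ x, W x ∂(Q : Measure E))))
    (tendsto_condExp : Tendsto (fun n =>
      ∫ x, |((P n : Measure E)[D | MeasurableSpace.comap Y inferInstance]) x| ∂(P n : Measure E))
      atTop (𝓝 0)) :
    (Q : Measure E)[D | MeasurableSpace.comap Y inferInstance] =ᵐ[(Q : Measure E)] 0 := by
  have D_integrable {μ : Measure E} (hμ : Integrable W μ) : Integrable D μ :=
    hμ.mono' hD.measurable.aestronglyMeasurable (ae_of_all _ hDW)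
  refine condExp_comap_eq_zero hY.measurable (D_integrable hQW) fun g hg hg1 => ?_
  have tendsto_integral : Tendsto (fun n => ∫ x, g (Y x) * D x ∂(P n : Measure E)) atTop
      (𝓝 (∫ x, g (Y x) * D x ∂(Q : Measure E))) := by
    refine tendsto_integral_of_abs_le hPQ (by fun_prop) hW (fun x => ?_) hPW hQW tendsto_W
    rw [abs_mul]
    exact (mul_le_of_le_one_left (abs_nonneg _) (hg1 _)).trans (hDW x)
  exact tendsto_nhds_unique tendsto_integral (squeeze_zero_norm
    (fun n => abs_integral_mul_le_integral_abs_condExp hY.measurable.comap_le (D_integrable (hPW n))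
      (hg.measurable.comp (comap_measurable Y)).stronglyMeasurable fun x => hg1 (Y x))
    tendsto_condExp)

end ConditionalExpectation

section PathSpace

variable {T d : ℕ}

/-- The `ℓ¹`-norm on path space. The norm that `Path T d` carries as a type is the supremum norm. -/
def l1Norm (x : Path T d) : ℝ := ∑ t, ∑ i, |x t i|

lemma l1Norm_nonneg : 0 ≤ (l1Norm : Path T d → ℝ) := fun _ =>
  Finset.sum_nonneg fun _ _ => Finset.sum_nonneg fun _ _ => abs_nonneg _

@[fun_prop]
lemma continuous_l1Norm : Continuous (l1Norm : Path T d → ℝ) := by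
  unfold l1Norm
  fun_prop

lemma abs_apply_le_l1Norm (x : Path T d) (t : Fin T) (i : Fin d) : |x t i| ≤ l1Norm x :=
  calc |x t i| ≤ ∑ j, |x t j| :=
        Finset.single_le_sum (f := fun j => |x t j|) (fun _ _ => abs_nonneg _) (Finset.mem_univ i)
    _ ≤ l1Norm x :=
        Finset.single_le_sum (f := fun s => ∑ j, |x s j|)
          (fun _ _ => Finset.sum_nonneg fun _ _ => abs_nonneg _) (Finset.mem_univ t)

lemma l1Norm_sub_le (x y : Path T d) : l1Norm (x - y) ≤ l1Norm x + l1Norm y := by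
  simp only [l1Norm, ← Finset.sum_add_distrib]
  gcongr
  exact abs_sub _ _

lemma isCompact_l1Norm_le (R : ℝ) : IsCompact {x : Path T d | l1Norm x ≤ R} := by
  refine (isCompact_Icc (a := fun _ _ => -R) (b := fun _ _ => R)).of_isClosed_subset
    (isClosed_le continuous_l1Norm continuous_const) fun x hx => ?_
  have apply_abs_le t i : |x t i| ≤ R := (abs_apply_le_l1Norm x t i).trans hx
  exact ⟨fun t i => (abs_le.1 (apply_abs_le t i)).1, fun t i => (abs_le.1 (apply_abs_le t i)).2⟩

section Marginals

variable {μ : Fin T → Fin d → Measure ℝ} {π : Measure (Path T d)}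

lemma HasMarginals.integrable_apply (hπ : HasMarginals π μ) {t : Fin T} {i : Fin d}
    (hμ : Integrable (fun y => y) (μ t i)) : Integrable (fun x => x t i) π := by
  rw [← hπ t i] at hμ
  exact hμ.comp_measurable (by fun_prop)

lemma HasMarginals.integrable_l1Norm (hπ : HasMarginals π μ)
    (hμ : ∀ t i, Integrable (fun y => y) (μ t i)) : Integrable l1Norm π :=
  integrable_finsetSum _ fun t _ => integrable_finsetSum _ fun i _ =>
    (hπ.integrable_apply (hμ t i)).abs

lemma HasMarginals.integral_l1Norm (hπ : HasMarginals π μ)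
    (hμ : ∀ t i, Integrable (fun y => y) (μ t i)) :
    ∫ x, l1Norm x ∂π = ∑ t, ∑ i, ∫ y, |y| ∂μ t i := by
  have integrable_abs t i : Integrable (fun x => |x t i|) π := (hπ.integrable_apply (hμ t i)).abs
  simp only [l1Norm]
  rw [integral_finsetSum _ fun t _ => integrable_finsetSum _ fun i _ => integrable_abs t i]
  refine Finset.sum_congr rfl fun t _ => ?_
  rw [integral_finsetSum _ fun i _ => integrable_abs t i]
  refine Finset.sum_congr rfl fun i _ => ?_
  rw [← hπ t i, integral_map (Measurable.aemeasurable (by fun_prop)) (by fun_prop)]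

variable {μn : ℕ → Fin T → Fin d → Measure ℝ}
  [∀ t i, IsProbabilityMeasure (μ t i)] [∀ n t i, IsProbabilityMeasure (μn n t i)]

lemma tendsto_integral_l1Norm {πs : ℕ → Measure (Path T d)} (hπs : ∀ n, HasMarginals (πs n) (μn n))
    (hμn : ∀ n t i, Integrable (fun y => y) (μn n t i))
    (hμ : ∀ t i, Integrable (fun y => y) (μ t i))
    (hW1 : ∀ t i, Tendsto (fun n => W1R (μn n t i) (μ t i)) atTop (𝓝 0)) :
    Tendsto (fun n => ∫ x, l1Norm x ∂πs n) atTop (𝓝 (∑ t, ∑ i, ∫ y, |y| ∂μ t i)) := by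
  simp only [fun n => (hπs n).integral_l1Norm (hμn n)]
  exact tendsto_finsetSum _ fun t _ => tendsto_finsetSum _ fun i _ =>
    tendsto_integral_of_tendsto_W1R (fun n => hμn n t i) (hμ t i) (hW1 t i) lipschitzWith_one_norm

lemma HasMarginals.of_tendsto {P : ℕ → ProbabilityMeasure (Path T d)}
    {Q : ProbabilityMeasure (Path T d)} (hPQ : Tendsto P atTop (𝓝 Q))
    (hP : ∀ n, HasMarginals (P n : Measure (Path T d)) (μn n))
    (hμn : ∀ n t i, Integrable (fun y => y) (μn n t i))
    (hμ : ∀ t i, Integrable (fun y => y) (μ t i))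
    (hW1 : ∀ t i, Tendsto (fun n => W1R (μn n t i) (μ t i)) atTop (𝓝 0)) :
    HasMarginals (Q : Measure (Path T d)) μ := by
  intro t i
  have continuous_apply : Continuous fun x : Path T d => x t i := by fun_prop
  have map_eq n : (P n).map continuous_apply.aemeasurable = ⟨μn n t i, inferInstance⟩ :=
    Subtype.ext (hP n t i)
  have tendsto_map := ProbabilityMeasure.tendsto_map_of_tendsto_of_continuous P Q hPQ
    continuous_apply
  simp only [map_eq] at tendsto_map
  have tendsto_marginal := tendsto_of_tendsto_W1R (μs := fun n => ⟨μn n t i, inferInstance⟩)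
    (μ := ⟨μ t i, inferInstance⟩) (fun n => hμn n t i) (hμ t i) (hW1 t i)
  exact congrArg ProbabilityMeasure.toMeasure (tendsto_nhds_unique tendsto_map tendsto_marginal)

end Marginals

lemma WeakTendsto.isProbabilityMeasure {πs : ℕ → Measure (Path T d)} {π : Measure (Path T d)}
    (h : WeakTendsto πs π) (hπs : ∀ n, IsProbabilityMeasure (πs n)) :
    IsProbabilityMeasure π := by
  have tendsto_one := h (BoundedContinuousFunction.const _ 1)
  simp only [BoundedContinuousFunction.const_apply, integral_const, probReal_univ, smul_eq_mul,
    mul_one] at tendsto_one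
  exact isProbabilityMeasure_iff_real.2 (tendsto_nhds_unique tendsto_one tendsto_const_nhds)

section Martingale

variable {t : ℕ} {π : Measure (Path T d)} [IsFiniteMeasure π]

/-- The restriction of a path to the times `0, …, t`, which generates the σ-algebra
`pastSigma T d t`. -/
def pastMap (T d t : ℕ) (x : Path T d) (s : {s : Fin T // (s : ℕ) ≤ t}) : Fin d → ℝ := x s

@[fun_prop]
lemma continuous_pastMap : Continuous (pastMap T d t) := by
  unfold pastMap
  fun_prop

lemma pastSigma_eq_comap_pastMap :
    pastSigma T d t = MeasurableSpace.comap (pastMap T d t) inferInstance := by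
  change _ = MeasurableSpace.comap (pastMap T d t) MeasurableSpace.pi
  simp only [pastSigma, MeasurableSpace.pi, MeasurableSpace.comap_iSup, iSup_subtype,
    MeasurableSpace.comap_comp]
  rfl

lemma pastSigma_le : pastSigma T d t ≤ MeasurableSpace.pi := by
  rw [pastSigma_eq_comap_pastMap]
  exact continuous_pastMap.measurable.comap_le

lemma measurable_pastSigma_apply (ht : t < T) (i : Fin d) :
    Measurable[pastSigma T d t] fun x : Path T d => x ⟨t, ht⟩ i := by
  rw [pastSigma_eq_comap_pastMap]
  have measurable_apply : Measurable fun y : {s : Fin T // (s : ℕ) ≤ t} → Fin d → ℝ =>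
    y ⟨⟨t, ht⟩, le_rfl⟩ i := by fun_prop
  exact measurable_apply.comp (comap_measurable _)

/-- The increment `X_{t+1,i} - X_{t,i}` of the coordinate process. -/
def increment (ht : t + 1 < T) (i : Fin d) (x : Path T d) : ℝ :=
  x ⟨t + 1, ht⟩ i - x ⟨t, Nat.lt_of_succ_lt ht⟩ i

lemma abs_increment_le (ht : t + 1 < T) (i : Fin d) (x : Path T d) :
    |increment ht i x| ≤ 2 * l1Norm x := by
  rw [two_mul]
  exact (abs_sub _ _).trans (add_le_add (abs_apply_le_l1Norm _ _ _) (abs_apply_le_l1Norm _ _ _))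

lemma condExp_increment (hπ : ∀ t i, Integrable (fun x => x t i) π) (ht : t + 1 < T) (i : Fin d) :
    π[increment ht i | pastSigma T d t] =ᵐ[π]
      fun x => condNext π t ht i x - x ⟨t, Nat.lt_of_succ_lt ht⟩ i := by
  have condExp_self := condExp_of_stronglyMeasurable pastSigma_le
    (measurable_pastSigma_apply (Nat.lt_of_succ_lt ht) i).stronglyMeasurable (hπ _ i)
  filter_upwards [condExp_sub (hπ ⟨t + 1, ht⟩ i) (hπ ⟨t, Nat.lt_of_succ_lt ht⟩ i)
    (pastSigma T d t)] with x hx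
  rw [Pi.sub_apply, condExp_self] at hx
  exact hx

lemma isMartingaleMeasure_of_condExp_increment (hπ : ∀ t i, Integrable (fun x => x t i) π)
    (h : ∀ (t : ℕ) (ht : t + 1 < T) (i : Fin d), π[increment ht i | pastSigma T d t] =ᵐ[π] 0) :
    IsMartingaleMeasure π := by
  intro t ht i
  filter_upwards [condExp_increment hπ ht i, h t ht i] with x hx h0
  exact sub_eq_zero.1 (hx.symm.trans h0)

lemma integral_abs_condExp_increment_le (hπ : ∀ t i, Integrable (fun x => x t i) π)
    (ht : t + 1 < T) (i : Fin d) :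
    ∫ x, |(π[increment ht i | pastSigma T d t]) x| ∂π ≤
      ∫ x, ∑ j, |condNext π t ht j x - x ⟨t, Nat.lt_of_succ_lt ht⟩ j| ∂π := by
  refine integral_mono_ae integrable_condExp.abs (integrable_finsetSum _ fun j _ =>
    (integrable_condExp.sub (hπ _ j)).abs) ?_
  filter_upwards [condExp_increment hπ ht i] with x hx
  rw [hx]
  exact Finset.single_le_sum
    (f := fun j => |condNext π t ht j x - x ⟨t, Nat.lt_of_succ_lt ht⟩ j|)
    (fun _ _ => abs_nonneg _) (Finset.mem_univ i)

end Martingale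

variable {P : ℕ → ProbabilityMeasure (Path T d)} {Q : ProbabilityMeasure (Path T d)}

lemma isMartingaleMeasure_of_tendsto {μn : ℕ → Fin T → Fin d → Measure ℝ}
    {μ : Fin T → Fin d → Measure ℝ} {ε : ℕ → ℝ} (hPQ : Tendsto P atTop (𝓝 Q))
    (hP : ∀ n, (P n : Measure (Path T d)) ∈ MartSetEps (μn n) (ε n))
    (hQ : HasMarginals (Q : Measure (Path T d)) μ)
    (hμn : ∀ n t i, Integrable (fun y => y) (μn n t i))
    (hμ : ∀ t i, Integrable (fun y => y) (μ t i)) (hε : Tendsto ε atTop (𝓝 0))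
    (tendsto_l1Norm : Tendsto (fun n => ∫ x, l1Norm x ∂(P n : Measure (Path T d))) atTop
      (𝓝 (∫ x, l1Norm x ∂(Q : Measure (Path T d))))) :
    IsMartingaleMeasure (Q : Measure (Path T d)) := by
  refine isMartingaleMeasure_of_condExp_increment (fun t i => hQ.integrable_apply (hμ t i))
    fun t ht i => ?_
  have defect_le n := (integral_abs_condExp_increment_le
    (fun t i => (hP n).2.1.integrable_apply (hμn n t i)) ht i).trans ((hP n).2.2 t ht)
  rw [pastSigma_eq_comap_pastMap] at defect_le ⊢
  exact condExp_comap_eq_zero_of_tendsto hPQ continuous_pastMap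
    (by unfold increment; fun_prop) (by fun_prop) (abs_increment_le ht i)
    (fun n => ((hP n).2.1.integrable_l1Norm (hμn n)).const_mul 2)
    ((hQ.integrable_l1Norm hμ).const_mul 2)
    (by simpa only [integral_const_mul] using tendsto_l1Norm.const_mul 2)
    (squeeze_zero (fun n => integral_nonneg fun _ => abs_nonneg _) defect_le hε)

lemma tendsto_W1Path_zero (hPQ : Tendsto P atTop (𝓝 Q))
    (hP : ∀ n, Integrable l1Norm (P n : Measure (Path T d)))
    (hQ : Integrable l1Norm (Q : Measure (Path T d)))
    (tendsto_l1Norm : Tendsto (fun n => ∫ x, l1Norm x ∂(P n : Measure (Path T d))) atTop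
      (𝓝 (∫ x, l1Norm x ∂(Q : Measure (Path T d))))) :
    Tendsto (fun n => W1Path T d (P n) Q) atTop (𝓝 0) :=
  tendsto_transportCost_zero (c := fun p => l1Norm (p.1 - p.2)) hPQ (by fun_prop)
    (fun _ => l1Norm_nonneg _) (fun x => by simp [l1Norm]) continuous_l1Norm
    (fun p => l1Norm_sub_le p.1 p.2) hP hQ tendsto_l1Norm

end PathSpace

/-- compactness of approximate martingale measures.
If `μⁿ_{t,i} → μ_{t,i}` in `𝒲₁` and `ε_n → 0`, then any sequence `π_n ∈ ℳ_{ε_n}(μ̌ⁿ)` is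
tight; every weak limit point lies in `ℳ(μ̌)`, and along any weakly convergent subsequence
the convergence also holds in Wasserstein-1 on the path space. -/
theorem approx_martingale_compactness {T d : ℕ}
    (μ : Fin T → Fin d → Measure ℝ)
    (hprob : ∀ t i, IsProbabilityMeasure (μ t i))
    (hmom : ∀ t i, Integrable (fun y : ℝ => y) (μ t i))
    (μn : ℕ → Fin T → Fin d → Measure ℝ)
    (hprobn : ∀ n t i, IsProbabilityMeasure (μn n t i))
    (hmomn : ∀ n t i, Integrable (fun y : ℝ => y) (μn n t i))
    (hW1 : ∀ t i, Tendsto (fun n => W1R (μn n t i) (μ t i)) atTop (nhds 0))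
    (ε : ℕ → ℝ) (hε0 : ∀ n, 0 ≤ ε n) (hε : Tendsto ε atTop (nhds 0))
    (πs : ℕ → Measure (Path T d))
    (hπs : ∀ n, πs n ∈ MartSetEps (μn n) (ε n)) :
    Tight πs ∧
    ∀ (π : Measure (Path T d)) (φ : ℕ → ℕ), StrictMono φ → WeakTendsto (πs ∘ φ) π →
      π ∈ MartSet μ ∧ Tendsto (fun k => W1Path T d (πs (φ k)) π) atTop (nhds 0) := by
  have hπs_prob n : IsProbabilityMeasure (πs n) := (hπs n).1
  have tendsto_l1Norm := tendsto_integral_l1Norm (fun n => (hπs n).2.1) hmomn hmom hW1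
  obtain ⟨C, hC⟩ := tendsto_l1Norm.bddAbove_range
  refine ⟨fun δ hδ => exists_isCompact_measure_compl_le_of_integral_le l1Norm_nonneg
    isCompact_l1Norm_le (fun n => (hπs n).2.1.integrable_l1Norm (hmomn n))
    (fun n => hC (mem_range_self n)) hδ, fun π φ hφ hπ => ?_⟩
  let P n : ProbabilityMeasure (Path T d) := ⟨πs (φ n), hπs_prob (φ n)⟩
  let Q : ProbabilityMeasure (Path T d) := ⟨π, hπ.isProbabilityMeasure fun n => hπs_prob (φ n)⟩
  have hPQ : Tendsto P atTop (𝓝 Q) := ProbabilityMeasure.tendsto_iff_forall_integral_tendsto.2 hπ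
  have hQ : HasMarginals π μ := HasMarginals.of_tendsto hPQ (fun n => (hπs (φ n)).2.1)
    (fun n => hmomn (φ n)) hmom fun t i => (hW1 t i).comp hφ.tendsto_atTop
  have tendsto_l1Norm_sub : Tendsto (fun n => ∫ x, l1Norm x ∂πs (φ n)) atTop
      (𝓝 (∫ x, l1Norm x ∂π)) := by
    rw [hQ.integral_l1Norm hmom]
    exact tendsto_l1Norm.comp hφ.tendsto_atTop
  have hQ_martingale := isMartingaleMeasure_of_tendsto hPQ (fun n => hπs (φ n)) hQ
    (fun n => hmomn (φ n)) hmom (hε.comp hφ.tendsto_atTop) tendsto_l1Norm_sub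
  have tendsto_W1Path := tendsto_W1Path_zero hPQ
    (fun n => (hπs (φ n)).2.1.integrable_l1Norm (hmomn (φ n))) (hQ.integrable_l1Norm hmom)
    tendsto_l1Norm_sub
  exact ⟨⟨Q.2, hQ, hQ_martingale⟩, tendsto_W1Path⟩

end MMOT
end
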